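/- Let S₁(X) denote the number of integers q ≤ X with q ≡ 1 (mod 4) for which the Erdős conjecture is false mod q. Then limsup_{X→∞} S₁(X)/(X/4) ≤ Σ_{d₁, d₂ odd, d₁ ≥ 3, d₂ ≥ 3} 1/(φ(d₁) φ(d₂) lcm(d₁,d₂)), where the (convergent) double sum is over all pairs of odd integers d₁, d₂ ≥ 3 and φ is Euler's totient function. -/

import Mathlib

open Filter Topology Finset

/-- `f : ℕ → ℤ` is Erdősian mod `q`: periodic with period `q`, takes values `±1`
off multiples of `q`, and `0` on multiples of `q`. -/
def IsErdosian (q : ℕ) (f : ℕ → ℤ) : Prop :=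
  (∀ n : ℕ, 1 ≤ n → f (n + q) = f n) ∧
  (∀ n : ℕ, 1 ≤ n → ¬ q ∣ n → f n = 1 ∨ f n = -1) ∧
  (∀ n : ℕ, 1 ≤ n → q ∣ n → f n = 0)

/-- The Erdős conjecture is false mod `q`: there is an Erdősian function mod `q`
whose partial sums `∑_{n=1}^N f(n)/n` tend to `0`. -/
def ErdosConjectureFalse (q : ℕ) : Prop :=
  ∃ f : ℕ → ℤ, IsErdosian q f ∧
    Tendsto (fun N : ℕ => ∑ n ∈ Finset.Icc 1 N, (f n : ℝ) / n) atTop (nhds 0)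

/-- The Erdős conjecture holds (is true) mod `q`. -/
def ErdosConjectureHolds (q : ℕ) : Prop := ¬ ErdosConjectureFalse q

/-!
Suppose that `f` is Erdősian modulo an odd `q > 1` and `∑ f(n) / n = 0`. Up to the factor `-1 / q`
this series is the linear form in logarithms `∑ f̂(a) log (1 - e(a / q))` with coefficients in the
cyclotomic field `K = ℚ(ζ_q)`. Let `x_g` be its conjugate under `g ∈ Gal(K/ℚ)`. For every algebraic
integer `y` of `K` the number `exp (∑ g(y) x_g)` lies in `K`, because the coefficients of the
exponent are traces and therefore integers. A transcendence argument in the style of Schneider, Lang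
and Baker (an auxiliary function from Siegel's lemma, extrapolation by the Schwarz lemma, and the
lower bound `1` for the norm of a nonzero algebraic integer) shows that this is impossible when some
but not all of the `x_g` vanish. Hence all of them vanish, that is, `∑ f(u n) / n = 0` for every
unit `u` modulo `q`.

Splitting `f` into Dirichlet characters, and using that `L(1, χ) ≠ 0` for `χ ≠ 1` and that the
`L`-function of the trivial character has a pole at `1`, one finds `∑ f(m) / m = 0`, where `m` now
runs over the integers all of whose prime factors divide `q`. The term `m = 1` is `±1` and the
others add up to at most `q / φ(q) - 1` in absolute value, so `q / φ(q) ≥ 2`. Since `q / φ(q)` is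
`∑ μ(d) ^ 2 / φ(d)` over `d ∣ q`, it follows that `∑ 1 / φ(d) ≥ 1` over the divisors `d ≥ 3` of `q`.
The bound is obtained by squaring this inequality, summing it over `q ≤ X` with `q ≡ 1 (mod 4)`, and
letting `X` tend to infinity with dominated convergence.
-/

universe u

/-! ### A Schwarz lemma with multiplicities -/

lemma exists_differentiable_eq_sub_pow_mul (a : ℂ) (m : ℕ) {f : ℂ → ℂ} (hf : Differentiable ℂ f)
    (hm : (m : ℕ∞) ≤ analyticOrderAt f a) :
    ∃ g : ℂ → ℂ, Differentiable ℂ g ∧ ∀ w, f w = (w - a) ^ m * g w := by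
  induction m generalizing f with
  | zero => exact ⟨f, hf, by simp⟩
  | succ m ih =>
    have hfa : f a = 0 := apply_eq_zero_of_analyticOrderAt_ne_zero fun h ↦ by simp [h] at hm
    have hslope : Differentiable ℂ (dslope f a) := by
      rw [← differentiableOn_univ] at hf ⊢
      exact (Complex.differentiableOn_dslope univ_mem).2 hf
    have hfactor : f = (fun w ↦ w - a) * dslope f a := by
      ext w
      simpa [hfa] using (sub_smul_dslope f a w).symm
    have horder : analyticOrderAt f a = 1 + analyticOrderAt (dslope f a) a := by
      conv_lhs => rw [hfactor, analyticOrderAt_mul (by fun_prop) (hslope.analyticAt a)]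
      simp
    rw [horder, Nat.cast_succ, add_comm, ENat.add_le_add_iff_left (by simp)] at hm
    obtain ⟨g, hg, hgf⟩ := ih hslope hm
    refine ⟨g, hg, fun w ↦ ?_⟩
    rw [congrFun hfactor w, Pi.mul_apply, hgf]
    ring

lemma exists_differentiable_eq_prod_sub_pow_mul (Z : Finset ℂ) (m : ℕ) {f : ℂ → ℂ}
    (hf : Differentiable ℂ f) (hm : ∀ a ∈ Z, (m : ℕ∞) ≤ analyticOrderAt f a) :
    ∃ g : ℂ → ℂ, Differentiable ℂ g ∧ ∀ w, f w = (∏ a ∈ Z, (w - a) ^ m) * g w := by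
  induction Z using Finset.induction_on generalizing f with
  | empty => exact ⟨f, hf, by simp⟩
  | insert a Z ha ih =>
    obtain ⟨g, hg, hgf⟩ := exists_differentiable_eq_sub_pow_mul a m hf (hm a (by simp))
    have hg_order : ∀ b ∈ Z, (m : ℕ∞) ≤ analyticOrderAt g b := by
      intro b hb
      have hne : (b - a) ^ m ≠ 0 := pow_ne_zero _ (sub_ne_zero.2 fun h ↦ ha (h ▸ hb))
      have hunit : analyticOrderAt (fun w : ℂ ↦ (w - a) ^ m) b = 0 :=
        (AnalyticAt.analyticOrderAt_eq_zero (by fun_prop)).2 hne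
      have hfactor : f = (fun w ↦ (w - a) ^ m) * g := funext hgf
      have hb' := hm b (by simp [hb])
      rwa [hfactor, analyticOrderAt_mul (by fun_prop) (hg.analyticAt b), hunit, zero_add] at hb'
    obtain ⟨k, hk, hkg⟩ := ih hg hg_order
    refine ⟨k, hk, fun w ↦ ?_⟩
    rw [hgf, hkg, prod_insert ha]
    ring

lemma norm_le_mul_prod_norm_sub_pow {f : ℂ → ℂ} (hf : Differentiable ℂ f) {Z : Finset ℂ} {m : ℕ}
    (hm : ∀ a ∈ Z, (m : ℕ∞) ≤ analyticOrderAt f a) {R B : ℝ} (hR : 0 < R)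
    (hZ : ∀ a ∈ Z, ‖a‖ ≤ R / 2) (hB : ∀ w, ‖w‖ = R → ‖f w‖ ≤ B) {w : ℂ} (hw : ‖w‖ ≤ R) :
    ‖f w‖ ≤ (∏ a ∈ Z, ‖w - a‖ ^ m) * (B * (2 / R) ^ (m * #Z)) := by
  obtain ⟨g, hg, hgf⟩ := exists_differentiable_eq_prod_sub_pow_mul Z m hf hm
  have hprod : ∀ z : ℂ, ‖z‖ = R → (R / 2) ^ (m * #Z) ≤ ‖∏ a ∈ Z, (z - a) ^ m‖ := by
    intro z hz
    rw [norm_prod, pow_mul, ← prod_const]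
    refine prod_le_prod (fun _ _ ↦ by positivity) fun a ha ↦ ?_
    rw [norm_pow]
    gcongr
    linarith [norm_sub_norm_le z a, hZ a ha]
  have hg_sphere : ∀ z : ℂ, ‖z‖ = R → ‖g z‖ ≤ B * (2 / R) ^ (m * #Z) := by
    intro z hz
    rw [← inv_div R 2, inv_pow, ← div_eq_mul_inv, le_div_iff₀' (by positivity)]
    calc (R / 2) ^ (m * #Z) * ‖g z‖ ≤ ‖∏ a ∈ Z, (z - a) ^ m‖ * ‖g z‖ := by gcongr; exact hprod z hz
      _ = ‖f z‖ := by rw [hgf, norm_mul]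
      _ ≤ B := hB z hz
  have hg_ball : ‖g w‖ ≤ B * (2 / R) ^ (m * #Z) := by
    refine Complex.norm_le_of_forall_mem_frontier_norm_le (U := Metric.ball 0 R)
      Metric.isBounded_ball hg.diffContOnCl (fun z hz ↦ hg_sphere z ?_) ?_
    · rw [frontier_ball _ hR.ne'] at hz
      simpa using hz
    · rw [closure_ball _ hR.ne']
      simpa using hw
  rw [hgf, norm_mul, norm_prod]
  simp_rw [norm_pow]
  gcongr

lemma norm_sub_natCast_le {S r n : ℕ} (hr : r < S) (hn : n < S) {z : ℂ} (hz : ‖z - r‖ = 1) :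
    ‖z - n‖ ≤ S := by
  have hdist : ‖(r : ℂ) - n‖ = |(r : ℝ) - n| := by
    rw [← Real.norm_eq_abs, ← Complex.norm_real]
    push_cast
    rfl
  have hr' : (r : ℝ) + 1 ≤ S := by exact_mod_cast hr
  have hn' : (n : ℝ) + 1 ≤ S := by exact_mod_cast hn
  have habs : |(r : ℝ) - n| ≤ S - 1 :=
    abs_le.2 ⟨by linarith [r.cast_nonneg (α := ℝ)], by linarith [n.cast_nonneg (α := ℝ)]⟩
  linarith [norm_sub_le_norm_sub_add_norm_sub z (r : ℂ) n]

lemma norm_iteratedDeriv_natCast_le {f : ℂ → ℂ} (hf : Differentiable ℂ f) {S m : ℕ} {R B : ℝ}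
    (hR : 2 * (S : ℝ) ≤ R) (hz : ∀ r < S, ∀ k < m, iteratedDeriv k f (r : ℂ) = 0)
    (hB : ∀ w : ℂ, ‖w‖ = R → ‖f w‖ ≤ B) {r : ℕ} (hr : r < S) :
    ‖iteratedDeriv m f (r : ℂ)‖ ≤ m.factorial * (B * (2 * S / R) ^ (m * S)) := by
  let Z : Finset ℂ := (range S).map Nat.castEmbedding
  have hZ : ∀ a ∈ Z, ∃ n < S, (n : ℂ) = a := by simp [Z]
  have hS : (r : ℝ) + 1 ≤ S := by exact_mod_cast hr
  have hR0 : 0 < R := by linarith [r.cast_nonneg (α := ℝ)]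
  have hB0 : 0 ≤ B := (norm_nonneg _).trans (hB R (by simp [hR0.le]))
  have horder : ∀ a ∈ Z, (m : ℕ∞) ≤ analyticOrderAt f a := by
    intro a ha
    obtain ⟨n, hn, rfl⟩ := hZ a ha
    exact (natCast_le_analyticOrderAt_iff_iteratedDeriv_eq_zero (hf.analyticAt _)).2 (hz n hn)
  have hnorm : ∀ a ∈ Z, ‖a‖ ≤ R / 2 := by
    intro a ha
    obtain ⟨n, hn, rfl⟩ := hZ a ha
    have : (n : ℝ) ≤ S := by exact_mod_cast hn.le
    rw [Complex.norm_natCast]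
    linarith
  have hcircle : ∀ z ∈ Metric.sphere (r : ℂ) 1, ‖f z‖ ≤ B * (2 * S / R) ^ (m * S) := by
    intro z hz
    rw [mem_sphere_iff_norm] at hz
    have hzR : ‖z‖ ≤ R := by
      have := norm_sub_norm_le z (r : ℂ)
      rw [hz, Complex.norm_natCast] at this
      linarith
    calc ‖f z‖ ≤ (∏ a ∈ Z, ‖z - a‖ ^ m) * (B * (2 / R) ^ (m * #Z)) :=
          norm_le_mul_prod_norm_sub_pow hf horder hR0 hnorm hB hzR
      _ ≤ (∏ _a ∈ Z, (S : ℝ) ^ m) * (B * (2 / R) ^ (m * #Z)) := by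
          gcongr with _ ha
          obtain ⟨n, hn, rfl⟩ := hZ _ ha
          exact norm_sub_natCast_le hr hn hz
      _ = B * (2 * S / R) ^ (m * S) := by
          rw [prod_const, show #Z = S by simp [Z], ← pow_mul, mul_div_right_comm, mul_pow]
          ring
  simpa using Complex.norm_iteratedDeriv_le_of_forall_mem_sphere_norm_le m one_pos
    hf.diffContOnCl hcircle

/-! ### Exponential sums in several variables -/

/-- The partial derivative of multi-order `κ`, at the point `r`, of the exponential sum
`u ↦ ∑ l, w l * exp (∑ j, u j * z l j)`. Only points with natural coordinates are needed. -/
noncomputable def expSumDeriv {Λ J : Type*} [Fintype Λ] [Fintype J] (w : Λ → ℂ) (z : Λ → J → ℂ)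
    (κ r : J → ℕ) : ℂ :=
  ∑ l, w l * Complex.exp (∑ j, r j * z l j) * ∏ j, z l j ^ κ j

/-- The coefficients of the restriction of `∂^κ ∑ l, w l * exp (∑ j, u j * z l j)` to the line
through `r` in direction `j₀`, as an exponential sum in the coordinate `u j₀`; the factors of the
direction `j₀` itself are left out. -/
noncomputable def lineCoeff {Λ J : Type*} [Fintype J] [DecidableEq J] (w : Λ → ℂ)
    (z : Λ → J → ℂ) (κ r : J → ℕ) (j₀ : J) (l : Λ) : ℂ :=
  w l * Complex.exp (∑ j ∈ univ.erase j₀, r j * z l j) * ∏ j ∈ univ.erase j₀, z l j ^ κ j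

lemma norm_lineCoeff_le {Λ J : Type*} [Fintype J] [DecidableEq J] {w : Λ → ℂ}
    {z : Λ → J → ℂ} {P Y : ℝ} {S N : ℕ} (hY : 1 ≤ Y) (hw : ∀ l, ‖w l‖ ≤ P)
    (hz : ∀ l j, ‖z l j‖ ≤ Y) {κ r : J → ℕ} (hκ : ∑ j, κ j ≤ N) (hr : ∀ j, r j < S) (j₀ : J)
    (l : Λ) :
    ‖lineCoeff w z κ r j₀ l‖ ≤ P * Real.exp (Fintype.card J * (S * Y)) * Y ^ N := by
  have hexp : ‖Complex.exp (∑ j ∈ univ.erase j₀, r j * z l j)‖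
      ≤ Real.exp (Fintype.card J * (S * Y)) := by
    refine (Complex.norm_exp_le_exp_norm _).trans (Real.exp_le_exp.2 ?_)
    calc ‖∑ j ∈ univ.erase j₀, r j * z l j‖ ≤ ∑ _j ∈ univ.erase j₀, (S * Y : ℝ) := by
          refine norm_sum_le_of_le _ fun j _ ↦ ?_
          rw [norm_mul, Complex.norm_natCast]
          have : (r j : ℝ) ≤ S := by exact_mod_cast (hr j).le
          gcongr
          exact hz l j
      _ ≤ ∑ _j : J, (S * Y : ℝ) :=
          sum_le_sum_of_subset_of_nonneg (erase_subset _ _) fun _ _ _ ↦ by positivity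
      _ = Fintype.card J * (S * Y) := by simp
  have hprod : ‖∏ j ∈ univ.erase j₀, z l j ^ κ j‖ ≤ Y ^ N := by
    calc ‖∏ j ∈ univ.erase j₀, z l j ^ κ j‖ ≤ ∏ j ∈ univ.erase j₀, Y ^ κ j := by
          rw [norm_prod]
          refine prod_le_prod (fun _ _ ↦ norm_nonneg _) fun j _ ↦ ?_
          rw [norm_pow]
          exact pow_le_pow_left₀ (norm_nonneg _) (hz l j) _
      _ = Y ^ ∑ j ∈ univ.erase j₀, κ j := prod_pow_eq_pow_sum _ _ _
      _ ≤ Y ^ N := pow_le_pow_right₀ hY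
          ((sum_le_sum_of_subset (erase_subset _ _)).trans hκ)
  have hP : 0 ≤ P := (norm_nonneg _).trans (hw l)
  rw [lineCoeff, norm_mul, norm_mul]
  gcongr
  exact hw l

section ExpSum

variable {Λ : Type*} [Fintype Λ]

lemma iteratedDeriv_sum_mul_exp (a z : Λ → ℂ) (k : ℕ) :
    iteratedDeriv k (fun u : ℂ ↦ ∑ l, a l * Complex.exp (u * z l)) =
      fun u ↦ ∑ l, a l * z l ^ k * Complex.exp (u * z l) := by
  induction k with
  | zero => simp
  | succ k ih =>
    rw [iteratedDeriv_succ, ih]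
    ext u
    have hderiv : HasDerivAt (fun u : ℂ ↦ ∑ l, a l * z l ^ k * Complex.exp (u * z l))
        (∑ l, a l * z l ^ k * (Complex.exp (u * z l) * (1 * z l))) u :=
      HasDerivAt.fun_sum fun l _ ↦ (((hasDerivAt_id u).mul_const (z l)).cexp).const_mul _
    rw [hderiv.deriv]
    exact sum_congr rfl fun l _ ↦ by ring

/- Expanding the product over all ways to choose one `b` for each of the `N` factors costs
`card B ^ N` terms, each of which is a monomial of total degree `N` in `z`. -/
lemma norm_sum_mul_prod_linear_pow_le {A B : Type*} [Fintype A] [Fintype B]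
    {w : Λ → ℂ} {z : Λ → B → ℂ} {c : A → B → ℂ} {C U : ℝ} {τ : A → ℕ}
    (hc : ∀ a b, ‖c a b‖ ≤ C)
    (hU : ∀ κ : B → ℕ, ∑ b, κ b = ∑ a, τ a → ‖∑ l, w l * ∏ b, z l b ^ κ b‖ ≤ U) :
    ‖∑ l, w l * ∏ a, (∑ b, c a b * z l b) ^ τ a‖ ≤ (Fintype.card B * C) ^ (∑ a, τ a) * U := by
  classical
  let degree (j : (Σ a, Fin (τ a)) → B) (b : B) : ℕ := #{i | j i = b}
  have hcard : Fintype.card (Σ a, Fin (τ a)) = ∑ a, τ a := by simp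
  have hdegree (j) : ∑ b, degree j b = ∑ a, τ a := by
    rw [← hcard, ← card_univ]
    exact (card_eq_sum_card_fiberwise (f := j) (t := univ) fun _ _ ↦ by simp).symm
  have hexpand (l : Λ) : ∏ a, (∑ b, c a b * z l b) ^ τ a
      = ∑ j : (Σ a, Fin (τ a)) → B, (∏ i, c i.1 (j i)) * ∏ b, z l b ^ degree j b := by
    have hsigma : ∏ a, (∑ b, c a b * z l b) ^ τ a
        = ∏ i : (Σ a, Fin (τ a)), ∑ b, c i.1 b * z l b := by
      simp [Fintype.prod_sigma]
    rw [hsigma, prod_univ_sum, Fintype.piFinset_univ]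
    refine sum_congr rfl fun j _ ↦ ?_
    rw [prod_mul_distrib, ← prod_fiberwise' univ j]
    simp [degree]
  have hcoeff (j : (Σ a, Fin (τ a)) → B) : ‖∏ i, c i.1 (j i)‖ ≤ C ^ (∑ a, τ a) := by
    rw [norm_prod, ← hcard, ← card_univ, ← prod_const]
    exact prod_le_prod (fun _ _ ↦ norm_nonneg _) fun i _ ↦ hc _ _
  calc ‖∑ l, w l * ∏ a, (∑ b, c a b * z l b) ^ τ a‖
      = ‖∑ j : (Σ a, Fin (τ a)) → B, (∏ i, c i.1 (j i)) * ∑ l, w l * ∏ b, z l b ^ degree j b‖ := by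
        simp_rw [hexpand, mul_sum]
        rw [sum_comm]
        simp_rw [mul_left_comm]
    _ ≤ ∑ _j : (Σ a, Fin (τ a)) → B, C ^ (∑ a, τ a) * U := by
        refine norm_sum_le_of_le _ fun j _ ↦ ?_
        rw [norm_mul]
        exact mul_le_mul (hcoeff j) (hU _ (hdegree j)) (norm_nonneg _)
          ((norm_nonneg _).trans (hcoeff j))
    _ = (Fintype.card B * C) ^ (∑ a, τ a) * U := by
        rw [sum_const, card_univ, Fintype.card_fun, hcard, nsmul_eq_mul]
        push_cast
        ring

variable {J : Type*} [Fintype J] {w : Λ → ℂ} {z : Λ → J → ℂ}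

lemma iteratedDeriv_sum_lineCoeff_mul_exp [DecidableEq J] (κ r : J → ℕ) (j₀ : J) (k s : ℕ) :
    iteratedDeriv k (fun u : ℂ ↦ ∑ l, lineCoeff w z κ r j₀ l * Complex.exp (u * z l j₀)) s =
      expSumDeriv w z (Function.update κ j₀ k) (Function.update r j₀ s) := by
  rw [iteratedDeriv_sum_mul_exp]
  refine sum_congr rfl fun l _ ↦ ?_
  have hexponent : ∑ j, (Function.update r j₀ s j : ℂ) * z l j =
      s * z l j₀ + ∑ j ∈ univ.erase j₀, r j * z l j := by
    rw [← add_sum_erase _ _ (mem_univ j₀), Function.update_self]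
    exact congrArg _ (sum_congr rfl fun j hj ↦ by rw [Function.update_of_ne (ne_of_mem_erase hj)])
  have hmonomial : ∏ j, z l j ^ Function.update κ j₀ k j =
      z l j₀ ^ k * ∏ j ∈ univ.erase j₀, z l j ^ κ j := by
    rw [← mul_prod_erase _ _ (mem_univ j₀), Function.update_self]
    exact congrArg _ (prod_congr rfl fun j hj ↦ by rw [Function.update_of_ne (ne_of_mem_erase hj)])
  rw [lineCoeff, hexponent, hmonomial, Complex.exp_add]
  ring

lemma norm_sum_mul_exp_le {a y : Λ → ℂ} {A Y R : ℝ} (ha : ∀ l, ‖a l‖ ≤ A) (hy : ∀ l, ‖y l‖ ≤ Y)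
    {u : ℂ} (hu : ‖u‖ = R) :
    ‖∑ l, a l * Complex.exp (u * y l)‖ ≤ Fintype.card Λ * (A * Real.exp (R * Y)) := by
  rw [← nsmul_eq_mul, ← card_univ, ← sum_const]
  refine norm_sum_le_of_le _ fun l _ ↦ ?_
  have hexp : ‖Complex.exp (u * y l)‖ ≤ Real.exp (R * Y) := by
    refine (Complex.norm_exp_le_exp_norm _).trans (Real.exp_le_exp.2 ?_)
    rw [norm_mul, hu]
    exact mul_le_mul_of_nonneg_left (hy l) (hu ▸ norm_nonneg u)
  rw [norm_mul]
  exact mul_le_mul (ha l) hexp (norm_nonneg _) ((norm_nonneg _).trans (ha l))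

/- One of the `card J` coordinates of `κ` is at least `N / card J`; along that direction the
exponential sum has `S` zeros of that multiplicity, and the Schwarz lemma applies. -/
lemma norm_expSumDeriv_le [Nonempty J] {S e N : ℕ} (hS : S = Fintype.card J * e) {P Y R : ℝ}
    (hY : 1 ≤ Y) (hR0 : 0 < R) (hR : 2 * (S : ℝ) ≤ R) (hw : ∀ l, ‖w l‖ ≤ P)
    (hz : ∀ l j, ‖z l j‖ ≤ Y)
    (hvanish : ∀ κ : J → ℕ, ∑ j, κ j < N → ∀ r : J → ℕ, (∀ j, r j < S) →
      expSumDeriv w z κ r = 0)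
    {κ r : J → ℕ} (hκ : ∑ j, κ j = N) (hr : ∀ j, r j < S) :
    ‖expSumDeriv w z κ r‖ ≤ N.factorial * ((Fintype.card Λ *
      (P * Real.exp (Fintype.card J * (S * Y)) * Y ^ N * Real.exp (R * Y))) *
        (2 * S / R) ^ (N * e)) := by
  classical
  obtain ⟨j₀, -, hj₀⟩ : ∃ j₀ ∈ univ, N ≤ Fintype.card J * κ j₀ :=
    exists_le_of_sum_le univ_nonempty (by simp [← mul_sum, hκ])
  have hκj₀ : κ j₀ ≤ N := hκ ▸ single_le_sum_of_canonicallyOrdered (mem_univ j₀)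
  let h (u : ℂ) : ℂ := ∑ l, lineCoeff w z κ r j₀ l * Complex.exp (u * z l j₀)
  have hzero : ∀ s < S, ∀ k < κ j₀, iteratedDeriv k h (s : ℂ) = 0 := by
    intro s hs k hk
    rw [iteratedDeriv_sum_lineCoeff_mul_exp]
    refine hvanish _ ?_ _ fun j ↦ ?_
    · rw [sum_update_of_mem (mem_univ j₀), sdiff_singleton_eq_erase, ← hκ,
        ← add_sum_erase _ κ (mem_univ j₀)]
      gcongr
    · obtain rfl | hj := eq_or_ne j j₀
      · simpa using hs
      · simpa [hj] using hr j
  have hcircle (u : ℂ) (hu : ‖u‖ = R) : ‖h u‖ ≤ _ :=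
    norm_sum_mul_exp_le (norm_lineCoeff_le hY hw hz hκ.le hr j₀) (fun l ↦ hz l j₀) hu
  have hbound := norm_iteratedDeriv_natCast_le (by fun_prop) hR hzero hcircle (hr j₀)
  rw [iteratedDeriv_sum_lineCoeff_mul_exp, Function.update_eq_self,
    Function.update_eq_self] at hbound
  have hcircle0 := (norm_nonneg _).trans (hcircle R (by simp [hR0.le]))
  have hexponent : N * e ≤ κ j₀ * S := by
    rw [hS, ← mul_assoc, mul_comm (κ j₀)]
    gcongr
  refine hbound.trans ?_
  gcongr ?_ * (_ * ?_)
  · exact_mod_cast Nat.factorial_le hκj₀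
  · exact pow_le_pow_of_le_one (by positivity) ((div_le_one hR0).2 hR) hexponent

end ExpSum

/-! ### Houses, norms and Siegel's lemma in a number field -/

section NumberField

open NumberField Module

lemma eq_zero_of_forall_sum_mul_pow_eq_zero {Λ R : Type*} [Fintype Λ] [CommRing R] [IsDomain R]
    {z w : Λ → R} (hz : Function.Injective z) (h : ∀ k : ℕ, ∑ l, w l * z l ^ k = 0) : w = 0 := by
  have hinj : Function.Injective fun l ↦ powersHom R (z l) := (powersHom R).injective.comp hz
  have hli := Fintype.linearIndependent_iff.1
    ((linearIndependent_monoidHom (Multiplicative ℕ) R).comp _ hinj) w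
  funext l
  refine hli (funext fun k ↦ ?_) l
  simpa using h k.toAdd

variable {K : Type u} [Field K] [NumberField K]

lemma house_le_of_forall_norm_embedding_le {y : K} {B : ℝ} (hB : 0 ≤ B)
    (h : ∀ φ : K →+* ℂ, ‖φ y‖ ≤ B) : house y ≤ B :=
  (pi_norm_le_iff_of_nonneg hB).2 h

lemma house_one : house (1 : K) = 1 := by
  simpa using house_intCast (K := K) 1

lemma one_le_norm_algebraNorm {y : K} (hy : IsIntegral ℤ y) (hy0 : y ≠ 0) :
    1 ≤ ‖Algebra.norm ℚ y‖ := by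
  obtain ⟨y, rfl⟩ : ∃ y' : 𝓞 K, (y' : K) = y := ⟨⟨y, hy⟩, rfl⟩
  rw [← Algebra.coe_norm_int, Int.norm_cast_rat, Int.norm_eq_abs]
  exact_mod_cast Int.one_le_abs (Algebra.norm_ne_zero_iff.2 (RingOfIntegers.coe_ne_zero_iff.1 hy0))

/- Linear independence of the characters `ψ ∘ σ h` of `K`. -/
lemma exists_sum_mul_conjugate_eq_ite {H I : Type*} [Finite H] [DecidableEq H] [Fintype I]
    (ψ : K →+* ℂ) {σ : H → K →+* K} (hσ : Function.Injective σ) (b : Basis I ℚ K) :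
    ∃ c : H → I → ℂ, ∀ g h, ∑ j, c g j * ψ (σ h (b j)) = if h = g then 1 else 0 := by
  classical
  cases nonempty_fintype H
  let v (h : H) (j : I) : ℂ := ψ (σ h (b j))
  have hchar : LinearIndependent ℂ fun h ↦ ((ψ.comp (σ h) : K →* ℂ) : K → ℂ) := by
    refine (linearIndependent_monoidHom K ℂ).comp (fun h ↦ ((ψ.comp (σ h) : K →+* ℂ) : K →* ℂ))
      fun g h hgh ↦ hσ (RingHom.ext fun y ↦ ψ.injective ?_)
    exact DFunLike.congr_fun hgh y
  have hinj : LinearMap.ker (Fintype.linearCombination ℂ v) = ⊥ := by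
    refine LinearMap.ker_eq_bot'.2 fun w hw ↦ ?_
    have hbasis (j : I) : ∑ h, w h * ψ (σ h (b j)) = 0 := by
      simpa [Fintype.linearCombination_apply, v] using congrFun hw j
    refine funext <| Fintype.linearIndependent_iff.1 hchar w <| funext fun y ↦ ?_
    have hexpand (h : H) : w h * ψ (σ h y) = ∑ j, (b.repr y j : ℂ) * (w h * ψ (σ h (b j))) := by
      conv_lhs => rw [← b.sum_repr y, map_sum, map_sum, mul_sum]
      refine sum_congr rfl fun j _ ↦ ?_
      rw [Rat.smul_def, map_mul, map_mul, map_ratCast, map_ratCast]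
      ring
    have hswap : ∑ h, w h * ψ (σ h y) = 0 := by
      rw [sum_congr rfl fun h _ ↦ hexpand h, sum_comm]
      exact sum_eq_zero fun j _ ↦ by rw [← mul_sum, hbasis, mul_zero]
    simpa using hswap
  obtain ⟨f, hf⟩ := (Fintype.linearCombination ℂ v).exists_leftInverse_of_injective hinj
  refine ⟨fun g j ↦ f (fun i ↦ if j = i then 1 else 0) g, fun g h ↦ ?_⟩
  have hdual : f (v h) = Pi.single h 1 := by
    simpa using LinearMap.congr_fun hf (Pi.single h 1)
  rw [LinearMap.pi_apply_eq_sum_univ f (v h)] at hdual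
  simpa [v, mul_comm, Pi.single_apply, eq_comm] using congrFun hdual g

variable (K) in
/-- `c` is an admissible constant in Siegel's lemma over `𝓞 K` for systems with at least twice as
many unknowns as equations, where Siegel's exponent is at most `1`. -/
def IsSiegelConstant (c : ℝ) : Prop :=
  ∀ {ι κ : Type u} [Fintype ι] [Fintype κ] [Nonempty κ] (a : Matrix ι κ (𝓞 K)) {A : ℝ}, 1 ≤ A →
    2 * Fintype.card ι ≤ Fintype.card κ → (∀ i l, house (a i l : K) ≤ A) →
    ∃ ξ : κ → 𝓞 K, ξ ≠ 0 ∧ a.mulVec ξ = 0 ∧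
      ∀ l, house (ξ l : K) ≤ c * (c * (Fintype.card κ * A))

lemma mul_rpow_le_mul_of_abs_le {c₀ c x e : ℝ} (hc : 1 ≤ c) (hc₀ : |c₀| ≤ c) (hx : 1 ≤ x)
    (he : 0 ≤ e) (he1 : e ≤ 1) : c₀ * (c₀ * x) ^ e ≤ c * (c * x) := by
  have hx0 : |c₀ * x| ≤ c * x := by
    rw [abs_mul, abs_of_nonneg (by linarith : 0 ≤ x)]
    gcongr
  calc c₀ * (c₀ * x) ^ e ≤ |c₀| * |(c₀ * x) ^ e| := (le_abs_self _).trans (abs_mul _ _).le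
    _ ≤ c * |c₀ * x| ^ e := by
        gcongr
        exact Real.abs_rpow_le_abs_rpow _ _
    _ ≤ c * (c * x) ^ e := by gcongr
    _ ≤ c * (c * x) ^ (1 : ℝ) := by
        gcongr
        exact one_le_mul_of_one_le_of_one_le hc hx
    _ = c * (c * x) := by rw [Real.rpow_one]

variable (K) in
lemma eventually_isSiegelConstant : ∀ᶠ c in atTop, IsSiegelConstant K c := by
  classical
  obtain ⟨c₀, hc₀⟩ : ∃ c₀ : ℝ, ∀ (ι κ : Type u) [Fintype ι] [Fintype κ] (a : Matrix ι κ (𝓞 K))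
      (A : ℝ), a ≠ 0 → 0 < Fintype.card ι → Fintype.card ι < Fintype.card κ →
      (∀ i l, house (a i l : K) ≤ A) → ∃ ξ : κ → 𝓞 K, ξ ≠ 0 ∧ a.mulVec ξ = 0 ∧
        ∀ l, house (ξ l : K) ≤ c₀ * (c₀ * (Fintype.card κ : ℝ) * A) ^
          ((Fintype.card ι : ℝ) / ((Fintype.card κ : ℝ) - Fintype.card ι)) :=
    ⟨_, fun ι κ _ _ a A ha h0 hικ hA ↦
      house.exists_ne_zero_int_vec_house_le K a ha h0 hικ rfl hA rfl⟩
  filter_upwards [eventually_ge_atTop 1, eventually_ge_atTop |c₀|] with c hc hcc₀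
  intro ι κ _ _ _ a A hA hικ ha
  have hκ : (1 : ℝ) ≤ Fintype.card κ := by exact_mod_cast Fintype.card_pos
  have hκA : 1 ≤ Fintype.card κ * A := one_le_mul_of_one_le_of_one_le hκ hA
  obtain rfl | ha0 := eq_or_ne a 0
  · refine ⟨1, one_ne_zero, Matrix.zero_mulVec _, fun l ↦ ?_⟩
    rw [Pi.one_apply, show ((1 : 𝓞 K) : K) = 1 from rfl, house_one]
    exact one_le_mul_of_one_le_of_one_le hc (one_le_mul_of_one_le_of_one_le hc hκA)
  have hι : 0 < Fintype.card ι := by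
    by_contra h
    have := Fintype.card_eq_zero_iff.1 (by omega : Fintype.card ι = 0)
    exact ha0 (Subsingleton.elim _ _)
  obtain ⟨ξ, hξ0, hξ, hhouse⟩ := hc₀ ι κ a A ha0 hι (by omega) ha
  refine ⟨ξ, hξ0, hξ, fun l ↦ (hhouse l).trans ?_⟩
  have hικ' : 2 * (Fintype.card ι : ℝ) ≤ Fintype.card κ := by exact_mod_cast hικ
  have hι' : (0 : ℝ) < Fintype.card ι := by exact_mod_cast hι
  rw [mul_assoc]
  exact mul_rpow_le_mul_of_abs_le hc hcc₀ hκA (div_nonneg (by linarith) (by linarith))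
    ((div_le_one (by linarith)).2 (by linarith))

end NumberField

/-! ### The auxiliary function -/

section Auxiliary

open NumberField Module

variable {K : Type u} [Field K] {H I : Type u} [Fintype H] [Fintype I] {L : ℕ}

/-- The integer combination of `b` with coefficients `l`; for an integral basis `b` these are the
frequencies of the auxiliary function. -/
def latticePoint (b : I → K) (l : I → Fin L) : K :=
  ∑ i, ((l i : ℕ) : K) * b i

/-- The contribution of the frequency `latticePoint b l` to the derivative of multi-order `τ`, at
the point `r`, of the auxiliary function. Here `α i j` stands for the algebraic number
`exp (∑ h, σ h (b i * b j) * x h)`, and the `h`-th derivation multiplies the term by the conjugate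
`σ h (latticePoint b l)`. -/
def auxMonomial (σ : H → K →+* K) (α : I → I → K) (b : I → K) (l : I → Fin L) (τ : H → ℕ)
    (r : I → ℕ) : K :=
  (∏ h, σ h (latticePoint b l) ^ τ h) * ∏ i, ∏ j, α i j ^ ((l i : ℕ) * r j)

/-- The derivative of multi-order `τ`, at the point `r`, of the auxiliary function with
coefficients `ξ`. -/
def auxValue [DecidableEq I] (σ : H → K →+* K) (α : I → I → K) (b : I → K)
    (ξ : (I → Fin L) → 𝓞 K) (τ : H → ℕ) (r : I → ℕ) : K :=
  ∑ l, (ξ l : K) * auxMonomial σ α b l τ r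

/-- The exponent of a common denominator of the numbers `α i j` that clears the denominators of
`auxMonomial` for frequencies below `L`, points below `S` and `d` basis elements. -/
def denomExponent (d L S : ℕ) : ℕ := d ^ 2 * (L * S)

/-- The bound for the house of an `auxMonomial` of order `n`, denominators cleared. -/
noncomputable def monomialBound (c : ℝ) (d L S n : ℕ) : ℝ :=
  c ^ (2 * denomExponent d L S) * (L * c) ^ n

/-- The bound that Siegel's lemma gives for the coefficients of the auxiliary function when the
equations have order at most `n`. -/
noncomputable def coeffBound (c : ℝ) (d L S n : ℕ) : ℝ :=
  c * (c * (L ^ d * monomialBound c d L S n))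

section

variable {b : I → K} {α : I → I → K} {σ : H → K →+* K}

lemma latticePoint_injective [CharZero K] (b : Basis I ℚ K) :
    Function.Injective (latticePoint b : (I → Fin L) → K) := by
  have hrepr (l : I → Fin L) (i : I) : b.repr (latticePoint b l) i = ((l i : ℕ) : ℚ) := by
    have : latticePoint b l = ∑ i, ((l i : ℕ) : ℚ) • b i := by
      simp [latticePoint, Rat.smul_def]
    rw [this, b.repr_sum_self]
  intro l l' h
  ext i
  have := hrepr l i
  rw [h, hrepr l' i] at this
  exact_mod_cast this.symm

lemma isIntegral_latticePoint (hb : ∀ i, IsIntegral ℤ (b i)) (l : I → Fin L) :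
    IsIntegral ℤ (latticePoint b l) :=
  IsIntegral.sum _ fun i _ ↦ (isIntegral_natCast _).mul (hb i)

lemma house_latticePoint_le [NumberField K] (l : I → Fin L) :
    house (latticePoint b l) ≤ L * ∑ i, house (b i) := by
  rw [mul_sum]
  refine (house_sum_le_sum_house _ _).trans (sum_le_sum fun i _ ↦ ?_)
  rw [house_nat_mul]
  have : ((l i : ℕ) : ℝ) ≤ L := by exact_mod_cast (l i).2.le
  gcongr
  exact house_nonneg _

lemma sum_sum_mul_le_denomExponent {S : ℕ} (l : I → Fin L) {r : I → ℕ} (hr : ∀ j, r j < S) :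
    ∑ i, ∑ j, (l i : ℕ) * r j ≤ denomExponent (Fintype.card I) L S :=
  calc ∑ i, ∑ j, (l i : ℕ) * r j ≤ ∑ _i : I, ∑ _j : I, L * S := by
        gcongr with i _ j
        · exact (l i).2.le
        · exact (hr j).le
    _ = denomExponent (Fintype.card I) L S := by
        simp only [sum_const, card_univ, smul_eq_mul, denomExponent]
        ring

/- Distribute `D` over the factors `α i j`, of which there are at most `denomExponent _ L S`. -/
lemma isIntegral_pow_mul_auxMonomial {S : ℕ} {D : ℤ} (hb : ∀ i, IsIntegral ℤ (b i))
    (hD : ∀ i j, IsIntegral ℤ ((D : K) * α i j)) (l : I → Fin L) (τ : H → ℕ) {r : I → ℕ}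
    (hr : ∀ j, r j < S) :
    IsIntegral ℤ ((D : K) ^ denomExponent (Fintype.card I) L S * auxMonomial σ α b l τ r) := by
  set E := denomExponent (Fintype.card I) L S
  set n := ∑ i, ∑ j, (l i : ℕ) * r j
  have hn : n ≤ E := sum_sum_mul_le_denomExponent l hr
  have hdistrib : ∏ i, ∏ j, ((D : K) * α i j) ^ ((l i : ℕ) * r j) =
      (D : K) ^ n * ∏ i, ∏ j, α i j ^ ((l i : ℕ) * r j) := by
    simp only [n, mul_pow, prod_mul_distrib, prod_pow_eq_pow_sum]
  have hsplit : (D : K) ^ E * auxMonomial σ α b l τ r = (D : K) ^ (E - n) *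
      ((∏ h, σ h (latticePoint b l) ^ τ h) * ∏ i, ∏ j, (D * α i j) ^ ((l i : ℕ) * r j)) := by
    rw [hdistrib, auxMonomial, ← pow_sub_mul_pow (D : K) hn]
    ring
  rw [hsplit]
  refine .mul (.pow (isIntegral_intCast _) _) (.mul ?_ ?_)
  · exact .prod _ fun h _ ↦ .pow ((isIntegral_latticePoint hb l).map (σ h).toIntAlgHom) _
  · exact .prod _ fun i _ ↦ .prod _ fun j _ ↦ (hD i j).pow _

end

variable [NumberField K]

/-- `D` is a common denominator of the numbers `α i j`, the `b i` are algebraic integers, and `c`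
bounds all the constants that enter the arithmetic estimates. -/
structure IsArithmeticBound (b : I → K) (α : I → I → K) (D : ℤ) (c : ℝ) : Prop where
  one_le : 1 ≤ c
  isSiegelConstant : IsSiegelConstant K c
  isIntegral (i : I) : IsIntegral ℤ (b i)
  sum_house_le : ∑ i, house (b i) ≤ c
  denom_ne_zero : D ≠ 0
  abs_denom_le : |(D : ℝ)| ≤ c
  isIntegral_mul (i j : I) : IsIntegral ℤ ((D : K) * α i j)
  house_le (i j : I) : house (α i j) ≤ c

lemma exists_eventually_isArithmeticBound {b : I → K} (hb : ∀ i, IsIntegral ℤ (b i))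
    (α : I → I → K) : ∃ D : ℤ, ∀ᶠ c in atTop, IsArithmeticBound b α D c := by
  classical
  obtain ⟨D, hD0, hD⟩ :=
    exists_integral_multiples ℤ ℚ (L := K) (univ.image fun p : I × I ↦ α p.1 p.2)
  refine ⟨D, ?_⟩
  filter_upwards [eventually_ge_atTop 1, eventually_isSiegelConstant K,
    eventually_ge_atTop (∑ i, house (b i)), eventually_ge_atTop |(D : ℝ)|,
    eventually_all.2 fun i ↦ eventually_all.2 fun j ↦ eventually_ge_atTop (house (α i j))]
    with c h1 hSiegel hbc hDc hα
  refine ⟨h1, hSiegel, hb, hbc, hD0, hDc, fun i j ↦ ?_, hα⟩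
  simpa [zsmul_eq_mul] using hD (α i j) (mem_image.2 ⟨(i, j), mem_univ _, rfl⟩)

namespace IsArithmeticBound

variable {b : I → K} {α : I → I → K} {σ : H → K →+* K} {D : ℤ} {c : ℝ} {S : ℕ}

lemma norm_embedding_prod_conjugate_le (hc : IsArithmeticBound b α D c) (φ : K →+* ℂ)
    (l : I → Fin L) (τ : H → ℕ) :
    ‖φ (∏ h, σ h (latticePoint b l) ^ τ h)‖ ≤ (L * c) ^ ∑ h, τ h := by
  rw [map_prod, norm_prod, ← prod_pow_eq_pow_sum]
  refine prod_le_prod (fun _ _ ↦ norm_nonneg _) fun h _ ↦ ?_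
  rw [map_pow, norm_pow]
  gcongr
  calc ‖(φ.comp (σ h)) (latticePoint b l)‖ ≤ house (latticePoint b l) :=
        norm_embedding_le_house _ _
    _ ≤ L * ∑ i, house (b i) := house_latticePoint_le l
    _ ≤ L * c := by
        gcongr
        exact hc.sum_house_le

lemma norm_embedding_prod_prod_pow_le (hc : IsArithmeticBound b α D c) (φ : K →+* ℂ)
    (l : I → Fin L) {r : I → ℕ} (hr : ∀ j, r j < S) :
    ‖φ (∏ i, ∏ j, α i j ^ ((l i : ℕ) * r j))‖ ≤ c ^ denomExponent (Fintype.card I) L S := by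
  refine le_trans ?_ (pow_le_pow_right₀ hc.one_le (sum_sum_mul_le_denomExponent l hr))
  simp_rw [map_prod, norm_prod, ← prod_pow_eq_pow_sum, map_pow, norm_pow]
  gcongr with i _ j
  exact (norm_embedding_le_house _ φ).trans (hc.house_le i j)

lemma house_pow_mul_auxMonomial_le (hc : IsArithmeticBound b α D c) (l : I → Fin L) (τ : H → ℕ)
    {r : I → ℕ} (hr : ∀ j, r j < S) :
    house ((D : K) ^ denomExponent (Fintype.card I) L S * auxMonomial σ α b l τ r) ≤
      monomialBound c (Fintype.card I) L S (∑ h, τ h) := by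
  have hc0 : 0 ≤ c := zero_le_one.trans hc.one_le
  refine house_le_of_forall_norm_embedding_le (by unfold monomialBound; positivity) fun φ ↦ ?_
  rw [auxMonomial, map_mul, map_mul, norm_mul, norm_mul, map_pow, norm_pow, map_intCast,
    Complex.norm_intCast, monomialBound, two_mul, pow_add, mul_assoc,
    mul_comm (c ^ denomExponent (Fintype.card I) L S) ((L * c) ^ _)]
  gcongr
  · exact hc.abs_denom_le
  · exact hc.norm_embedding_prod_conjugate_le φ l τ
  · exact hc.norm_embedding_prod_prod_pow_le φ l hr

lemma one_le_monomialBound (hc : IsArithmeticBound b α D c) (hL : 0 < L) (d n : ℕ) :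
    1 ≤ monomialBound c d L S n :=
  one_le_mul_of_one_le_of_one_le (one_le_pow₀ hc.one_le)
    (one_le_pow₀ (one_le_mul_of_one_le_of_one_le (by exact_mod_cast hL) hc.one_le))

lemma monomialBound_le_monomialBound (hc : IsArithmeticBound b α D c) (hL : 0 < L) (d : ℕ)
    {n n' : ℕ} (hn : n ≤ n') : monomialBound c d L S n ≤ monomialBound c d L S n' := by
  have hLc : 1 ≤ L * c := one_le_mul_of_one_le_of_one_le (by exact_mod_cast hL) hc.one_le
  have hc0 : 0 ≤ c := zero_le_one.trans hc.one_le
  unfold monomialBound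
  gcongr

lemma denom_pow_ne_zero (hc : IsArithmeticBound b α D c) (n : ℕ) : (D : K) ^ n ≠ 0 :=
  pow_ne_zero _ (by exact_mod_cast hc.denom_ne_zero)

/- Siegel's lemma for the equations of order below `T` in each direction at the points below `S`. -/
lemma exists_auxValue_eq_zero [DecidableEq I] (hc : IsArithmeticBound b α D c) (hL : 0 < L)
    {T n : ℕ} (hn : Fintype.card H * T ≤ n)
    (hcard : 2 * (T ^ Fintype.card H * S ^ Fintype.card I) ≤ L ^ Fintype.card I) :
    ∃ ξ : (I → Fin L) → 𝓞 K, ξ ≠ 0 ∧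
      (∀ l, house (ξ l : K) ≤ coeffBound c (Fintype.card I) L S n) ∧
      ∀ (τ : H → ℕ) (r : I → ℕ), (∀ h, τ h < T) → (∀ j, r j < S) → auxValue σ α b ξ τ r = 0 := by
  classical
  set E := denomExponent (Fintype.card I) L S
  have : Nonempty (I → Fin L) := ⟨fun _ ↦ ⟨0, hL⟩⟩
  let a : Matrix ((H → Fin T) × (I → Fin S)) (I → Fin L) (𝓞 K) := fun e l ↦
    ⟨(D : K) ^ E * auxMonomial σ α b l (fun h ↦ (e.1 h : ℕ)) (fun j ↦ (e.2 j : ℕ)),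
      isIntegral_pow_mul_auxMonomial hc.isIntegral hc.isIntegral_mul l _ fun j ↦ (e.2 j).2⟩
  have hhouse (e l) : house (a e l : K) ≤ monomialBound c (Fintype.card I) L S n := by
    refine (hc.house_pow_mul_auxMonomial_le l _ fun j ↦ (e.2 j).2).trans
      (hc.monomialBound_le_monomialBound hL _ (le_trans ?_ hn))
    simpa using sum_le_sum fun h (_ : h ∈ univ) ↦ (e.1 h).2.le
  obtain ⟨ξ, hξ0, hξ, hξc⟩ := hc.isSiegelConstant a (hc.one_le_monomialBound hL _ n)
    (by simpa using hcard) hhouse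
  refine ⟨ξ, hξ0, fun l ↦ by simpa [coeffBound] using hξc l, fun τ r hτ hr ↦ ?_⟩
  have hrow : (D : K) ^ E * auxValue σ α b ξ τ r = 0 := by
    have hrow' := congrArg (fun v ↦ (v (fun h ↦ ⟨τ h, hτ h⟩, fun j ↦ ⟨r j, hr j⟩) : K)) hξ
    simp only [Matrix.mulVec, dotProduct, Pi.zero_apply, map_sum, map_zero, a] at hrow'
    rw [← hrow', auxValue, mul_sum]
    refine sum_congr rfl fun l _ ↦ ?_
    rw [mul_left_comm, mul_comm]
    rfl
  exact (mul_eq_zero.1 hrow).resolve_left (hc.denom_pow_ne_zero E)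

/- The norm of the nonzero algebraic integer `D ^ E * auxValue` is at least `1`. -/
lemma one_le_mul_norm_auxValue [DecidableEq I] (hc : IsArithmeticBound b α D c)
    {ξ : (I → Fin L) → 𝓞 K} {P : ℝ} (hξ : ∀ l, house (ξ l : K) ≤ P) {τ : H → ℕ} {r : I → ℕ}
    (hr : ∀ j, r j < S) (hne : auxValue σ α b ξ τ r ≠ 0) (ψ : K →+* ℂ) :
    1 ≤ c ^ denomExponent (Fintype.card I) L S * ‖ψ (auxValue σ α b ξ τ r)‖ *
      (L ^ Fintype.card I * (P * monomialBound c (Fintype.card I) L S (∑ h, τ h))) ^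
        (finrank ℚ K - 1) := by
  set E := denomExponent (Fintype.card I) L S
  set y := (D : K) ^ E * auxValue σ α b ξ τ r with hy
  have hsum : y = ∑ l, (ξ l : K) * ((D : K) ^ E * auxMonomial σ α b l τ r) := by
    simp only [hy, auxValue, mul_sum, mul_left_comm]
  have hint : IsIntegral ℤ y := hsum ▸ .sum _ fun l _ ↦ (ξ l).2.mul
    (isIntegral_pow_mul_auxMonomial hc.isIntegral hc.isIntegral_mul l τ hr)
  have hhouse : house y ≤
      L ^ Fintype.card I * (P * monomialBound c (Fintype.card I) L S (∑ h, τ h)) := by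
    calc house y ≤ ∑ l, house ((ξ l : K) * ((D : K) ^ E * auxMonomial σ α b l τ r)) :=
          hsum ▸ house_sum_le_sum_house _ _
      _ ≤ ∑ _l : I → Fin L, P * monomialBound c (Fintype.card I) L S (∑ h, τ h) := by
          refine sum_le_sum fun l _ ↦ (house_mul_le _ _).trans ?_
          exact mul_le_mul (hξ l) (hc.house_pow_mul_auxMonomial_le l τ hr) (house_nonneg _)
            ((house_nonneg _).trans (hξ l))
      _ = _ := by simp
  calc (1 : ℝ) ≤ ‖Algebra.norm ℚ y‖ :=
        one_le_norm_algebraNorm hint (mul_ne_zero (hc.denom_pow_ne_zero E) hne)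
    _ ≤ ‖ψ y‖ * house y ^ (finrank ℚ K - 1) := norm_norm_le_norm_mul_house_pow y ψ
    _ ≤ _ := by
        rw [hy, map_mul, norm_mul, map_pow, norm_pow, map_intCast, Complex.norm_intCast, ← hy]
        have hD := hc.abs_denom_le
        have hy0 := house_nonneg y
        have hc0 : 0 ≤ c := zero_le_one.trans hc.one_le
        gcongr

end IsArithmeticBound

/- If all derivatives at `0` in one direction vanished, so would the Vandermonde system of `ξ`. -/
lemma exists_auxValue_ne_zero [DecidableEq I] [Nonempty H] (σ : H → K →+* K) (α : I → I → K)
    (b : Basis I ℚ K) {ξ : (I → Fin L) → 𝓞 K} (hξ : ξ ≠ 0) :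
    ∃ τ : H → ℕ, auxValue σ α b ξ τ 0 ≠ 0 := by
  classical
  by_contra! hzero
  obtain ⟨h⟩ := ‹Nonempty H›
  have hvandermonde := eq_zero_of_forall_sum_mul_pow_eq_zero (w := fun l ↦ (ξ l : K))
    ((σ h).injective.comp (latticePoint_injective (L := L) b)) fun k ↦ by
      simpa [auxValue, auxMonomial, Pi.single_apply, Function.update_apply,
        Fintype.prod_eq_single h] using hzero (Pi.single h k)
  exact hξ (funext fun l ↦ RingOfIntegers.coe_eq_zero_iff.1 (congrFun hvandermonde l))

lemma exists_minimal_auxValue_ne_zero [DecidableEq I] [Nonempty H] (σ : H → K →+* K) (α : I → I → K)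
    (b : Basis I ℚ K) {ξ : (I → Fin L) → 𝓞 K} (hξ : ξ ≠ 0) {S : ℕ} (hS : 0 < S) :
    ∃ (τ : H → ℕ) (r : I → ℕ), (∀ j, r j < S) ∧ auxValue σ α b ξ τ r ≠ 0 ∧
      ∀ τ' : H → ℕ, ∑ h, τ' h < ∑ h, τ h → ∀ r' : I → ℕ, (∀ j, r' j < S) →
        auxValue σ α b ξ τ' r' = 0 := by
  classical
  have hex : ∃ N, ∃ τ : H → ℕ, ∑ h, τ h = N ∧
      ∃ r : I → ℕ, (∀ j, r j < S) ∧ auxValue σ α b ξ τ r ≠ 0 := by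
    obtain ⟨τ, hτ⟩ := exists_auxValue_ne_zero σ α b hξ
    exact ⟨_, τ, rfl, 0, fun _ ↦ hS, hτ⟩
  obtain ⟨τ, hτ, r, hr, hne⟩ := Nat.find_spec hex
  refine ⟨τ, r, hr, hne, fun τ' hτ' r' hr' ↦ ?_⟩
  by_contra hne'
  exact Nat.find_min hex (hτ ▸ hτ') ⟨τ', rfl, r', hr', hne'⟩

end Auxiliary

/-! ### Choice of parameters -/

section Growth

/-- `f M N` grows at most like `A ^ N * (N ^ N) ^ j` in the range `N ≥ M ^ d`. In the transcendence
argument every factor depending on the parameter `M` and on the order of vanishing `N` has this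
form, and only the total exponent `j` matters. -/
def HasGrowthOrder (d j : ℕ) (f : ℕ → ℕ → ℝ) : Prop :=
  ∃ A : ℝ, 0 ≤ A ∧ ∀ M N, 1 ≤ M → M ^ d ≤ N → 0 ≤ f M N ∧ f M N ≤ A ^ N * ((N : ℝ) ^ N) ^ j

namespace HasGrowthOrder

variable {d i j : ℕ} {f g : ℕ → ℕ → ℝ}

lemma mul (hf : HasGrowthOrder d i f) (hg : HasGrowthOrder d j g) :
    HasGrowthOrder d (i + j) fun M N ↦ f M N * g M N := by
  obtain ⟨A, hA, hf⟩ := hf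
  obtain ⟨B, hB, hg⟩ := hg
  refine ⟨A * B, mul_nonneg hA hB, fun M N hM hN ↦ ?_⟩
  obtain ⟨hf0, hf⟩ := hf M N hM hN
  obtain ⟨hg0, hg⟩ := hg M N hM hN
  refine ⟨mul_nonneg hf0 hg0, (mul_le_mul hf hg hg0 (by positivity)).trans_eq ?_⟩
  rw [mul_pow, pow_add]
  ring

lemma pow (hf : HasGrowthOrder d j f) (k : ℕ) : HasGrowthOrder d (j * k) fun M N ↦ f M N ^ k := by
  obtain ⟨A, hA, hf⟩ := hf
  refine ⟨A ^ k, pow_nonneg hA k, fun M N hM hN ↦ ?_⟩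
  obtain ⟨hf0, hf⟩ := hf M N hM hN
  refine ⟨pow_nonneg hf0 k, (pow_le_pow_left₀ hf0 hf k).trans_eq ?_⟩
  rw [mul_pow, ← pow_mul, ← pow_mul, ← pow_mul, mul_comm N k, pow_mul A]

lemma mono (hg : HasGrowthOrder d j g)
    (hfg : ∀ M N, 1 ≤ M → M ^ d ≤ N → 0 ≤ f M N ∧ f M N ≤ g M N) : HasGrowthOrder d j f := by
  obtain ⟨A, hA, hg⟩ := hg
  exact ⟨A, hA, fun M N hM hN ↦ ⟨(hfg M N hM hN).1, (hfg M N hM hN).2.trans (hg M N hM hN).2⟩⟩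

lemma exp {A : ℝ} (hf : ∀ M N, 1 ≤ M → M ^ d ≤ N → f M N ≤ A * N) :
    HasGrowthOrder d 0 fun M N ↦ Real.exp (f M N) := by
  refine ⟨Real.exp A, (Real.exp_pos A).le, fun M N hM hN ↦ ⟨(Real.exp_pos _).le, ?_⟩⟩
  rw [pow_zero, mul_one, ← Real.exp_nat_mul, mul_comm]
  exact Real.exp_le_exp.2 (hf M N hM hN)

lemma of_le_linear {A : ℝ}
    (hf : ∀ M N, 1 ≤ M → M ^ d ≤ N → 0 ≤ f M N ∧ f M N ≤ A * N) : HasGrowthOrder d 0 f :=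
  (exp fun M N hM hN ↦ (hf M N hM hN).2).mono fun M N hM hN ↦
    ⟨(hf M N hM hN).1, (le_add_of_nonneg_right zero_le_one).trans (Real.add_one_le_exp _)⟩

lemma const {c : ℝ} (hc : 0 ≤ c) : HasGrowthOrder d 0 fun _ _ ↦ c := by
  refine of_le_linear (A := c) fun M N hM hN ↦ ⟨hc, le_mul_of_one_le_right hc ?_⟩
  exact_mod_cast (Nat.one_le_pow d M hM).trans hN

lemma pow_of_le_linear {c A : ℝ} {n : ℕ → ℕ → ℕ} (hc : 1 ≤ c)
    (hn : ∀ M N, 1 ≤ M → M ^ d ≤ N → (n M N : ℝ) ≤ A * N) :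
    HasGrowthOrder d 0 fun M N ↦ c ^ n M N := by
  refine (exp (f := fun M N ↦ n M N * Real.log c) (A := A * Real.log c) fun M N hM hN ↦ ?_).mono
    fun M N _ _ ↦ ⟨by positivity, ?_⟩
  · rw [mul_right_comm]
    exact mul_le_mul_of_nonneg_right (hn M N hM hN) (Real.log_nonneg hc)
  · rw [Real.exp_nat_mul, Real.exp_log (by positivity)]

lemma pow_self_of_le_linear {A : ℝ}
    (hf : ∀ M N, 1 ≤ M → M ^ d ≤ N → 0 ≤ f M N ∧ f M N ≤ A * N) :
    HasGrowthOrder d 1 fun M N ↦ f M N ^ N := by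
  refine ⟨|A|, abs_nonneg A, fun M N hM hN ↦ ?_⟩
  obtain ⟨hf0, hf⟩ := hf M N hM hN
  refine ⟨by positivity, ?_⟩
  rw [pow_one, ← mul_pow]
  exact pow_le_pow_left₀ hf0 (hf.trans (by gcongr; exact le_abs_self A)) N

lemma factorial : HasGrowthOrder d 1 fun _ N ↦ (N.factorial : ℝ) := by
  refine ⟨1, zero_le_one, fun M N _ _ ↦ ⟨by positivity, ?_⟩⟩
  simp only [one_pow, one_mul, pow_one]
  exact_mod_cast Nat.factorial_le_pow N

/- The quotient is at most `(A * B / N) ^ N`. -/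
lemma eventually_mul_div_lt_one (hf : HasGrowthOrder d j f) (hd : d ≠ 0) {B : ℝ} (hB : 0 ≤ B) :
    ∀ᶠ M in atTop, ∀ N, M ^ d ≤ N → f M N * (B ^ N / ((N : ℝ) ^ N) ^ (j + 1)) < 1 := by
  obtain ⟨A, hA, hf⟩ := hf
  obtain ⟨M₀, hM₀⟩ := exists_nat_gt (A * B)
  filter_upwards [eventually_ge_atTop (max M₀ 1)] with M hM N hN
  have hM1 : 1 ≤ M := (le_max_right _ _).trans hM
  have hMN : M ≤ N := (Nat.le_self_pow hd M).trans hN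
  have hN0 : (0 : ℝ) < N := by exact_mod_cast hM1.trans hMN
  have hABN : A * B < N := hM₀.trans_le (by exact_mod_cast ((le_max_left _ _).trans hM).trans hMN)
  calc f M N * (B ^ N / ((N : ℝ) ^ N) ^ (j + 1))
      ≤ A ^ N * ((N : ℝ) ^ N) ^ j * (B ^ N / ((N : ℝ) ^ N) ^ (j + 1)) := by
        gcongr
        exact (hf M N hM1 hN).2
    _ = (A * B / N) ^ N := by
        rw [pow_succ, div_pow, mul_pow]
        field_simp
    _ < 1 := pow_lt_one₀ (by positivity) ((div_lt_one hN0).2 hABN) (by omega)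

end HasGrowthOrder

/-- The multiplicity with which the zeros gain in the Schwarz lemma: `1 / d` of it, the exponent of
`N ^ N` that is won, exceeds the exponent `d ^ 2 + d + 1` that is lost in the estimates. -/
def gainExponent (d : ℕ) : ℕ := d * (d ^ 2 + d + 1 + 1)

/-- The auxiliary function is studied at the points with coordinates below `pointBound d`. -/
def pointBound (d : ℕ) : ℕ := d * gainExponent d

/-- The number of values of each coordinate of a frequency. It makes Siegel's lemma applicable to
the equations of order below `M ^ d` in at most `d - 1` directions. -/
def freqBound (d M : ℕ) : ℕ := 2 * pointBound d * M ^ (d - 1)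

/-- The bound for the auxiliary function on a disc of radius `R`, with coefficients bounded by `P`
and derivatives of order `N`. -/
noncomputable def derivBound (c : ℝ) (d L S N : ℕ) (R P : ℝ) : ℝ :=
  c ^ N * (N.factorial * (L ^ d *
    (P * Real.exp (d * (S * (c * L))) * (c * L) ^ N * Real.exp (R * (c * L)))))

/-- The upper bound that the choice of parameters gives for the absolute norm of the first
nonvanishing derivative, of order `N`, of the auxiliary function: the common denominator times the
Schwarz bound for one conjugate times the house to the power `d - 1`. -/
noncomputable def liouvilleProduct (c : ℝ) (d M N : ℕ) : ℝ :=
  c ^ denomExponent d (freqBound d M) (pointBound d) *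
    (derivBound c d (freqBound d M) (pointBound d) N ((N : ℝ) ^ (d : ℝ)⁻¹)
      (coeffBound c d (freqBound d M) (pointBound d) (d * M ^ d)) *
        (2 * pointBound d / (N : ℝ) ^ (d : ℝ)⁻¹) ^ (N * gainExponent d)) *
    (freqBound d M ^ d * (coeffBound c d (freqBound d M) (pointBound d) (d * M ^ d) *
      monomialBound c d (freqBound d M) (pointBound d) N)) ^ (d - 1)

variable {d : ℕ} {c : ℝ}

lemma pointBound_pos (hd : d ≠ 0) : 0 < pointBound d := by
  unfold pointBound gainExponent
  positivity

lemma freqBound_pos (hd : d ≠ 0) {M : ℕ} (hM : 0 < M) : 0 < freqBound d M := by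
  have := pointBound_pos hd
  unfold freqBound
  positivity

lemma two_mul_pow_mul_pointBound_le (hd : d ≠ 0) {M h : ℕ} (hM : 0 < M) (hh : h < d) :
    2 * ((M ^ d) ^ h * pointBound d ^ d) ≤ freqBound d M ^ d :=
  calc 2 * ((M ^ d) ^ h * pointBound d ^ d)
      ≤ 2 ^ d * ((M ^ d) ^ (d - 1) * pointBound d ^ d) := by
        gcongr
        · exact Nat.le_self_pow hd 2
        · exact Nat.one_le_pow _ _ hM
        · omega
    _ = freqBound d M ^ d := by
        rw [freqBound, mul_pow, mul_pow, ← pow_mul, ← pow_mul, mul_comm d]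
        ring

lemma mul_freqBound_le (hd : d ≠ 0) {M : ℕ} {R : ℝ} (hMR : M ≤ R) :
    R * freqBound d M ≤ 2 * pointBound d * R ^ d :=
  calc R * freqBound d M = 2 * pointBound d * (M ^ (d - 1) * R) := by
        push_cast [freqBound]
        ring
    _ ≤ 2 * pointBound d * (R ^ (d - 1) * R) := by
        have hR : 0 ≤ R := (Nat.cast_nonneg M).trans hMR
        gcongr
    _ = 2 * pointBound d * R ^ d := by rw [pow_sub_one_mul hd]

lemma freqBound_le {M N : ℕ} (hM : 1 ≤ M) (hN : M ^ d ≤ N) :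
    (freqBound d M : ℝ) ≤ 2 * pointBound d * N := by
  have hMN : M ^ (d - 1) ≤ N := (Nat.pow_le_pow_right hM (Nat.sub_le d 1)).trans hN
  push_cast [freqBound]
  gcongr
  exact_mod_cast hMN

lemma natCast_le_rpow_inv {M N : ℕ} (hd : d ≠ 0) (hN : M ^ d ≤ N) :
    (M : ℝ) ≤ (N : ℝ) ^ (d : ℝ)⁻¹ := by
  rw [← Real.pow_rpow_inv_natCast (Nat.cast_nonneg M) hd]
  gcongr
  exact_mod_cast hN

lemma two_mul_pointBound_div_pow {N : ℕ} (hd : d ≠ 0) :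
    (2 * pointBound d / (N : ℝ) ^ (d : ℝ)⁻¹) ^ (N * gainExponent d) =
      ((2 * pointBound d : ℝ) ^ gainExponent d) ^ N / ((N : ℝ) ^ N) ^ (d ^ 2 + d + 1 + 1) := by
  have hroot : (((N : ℝ) ^ (d : ℝ)⁻¹) ^ gainExponent d) ^ N =
      ((N : ℝ) ^ N) ^ (d ^ 2 + d + 1 + 1) := by
    rw [gainExponent, pow_mul, Real.rpow_inv_natCast_pow N.cast_nonneg hd, ← pow_mul, ← pow_mul,
      mul_comm N]
  rw [mul_comm N, pow_mul, div_pow, div_pow, hroot]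

lemma hasGrowthOrder_freqBound_pow : HasGrowthOrder d 0 fun M _ ↦ (freqBound d M : ℝ) ^ d := by
  simpa using (HasGrowthOrder.of_le_linear fun M N hM hN ↦
    ⟨Nat.cast_nonneg _, freqBound_le (d := d) hM hN⟩).pow d

lemma hasGrowthOrder_mul_freqBound_pow (hc : 1 ≤ c) :
    HasGrowthOrder d 1 fun M N ↦ (c * freqBound d M) ^ N := by
  refine .pow_self_of_le_linear (A := c * (2 * pointBound d)) fun M N hM hN ↦
    ⟨by positivity, ?_⟩
  rw [mul_assoc]
  gcongr
  exact freqBound_le hM hN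

lemma hasGrowthOrder_pow_denomExponent (hc : 1 ≤ c) (k : ℕ) :
    HasGrowthOrder d 0 fun M _ ↦ c ^ (k * denomExponent d (freqBound d M) (pointBound d)) := by
  refine .pow_of_le_linear hc (A := k * (d ^ 2 * (2 * pointBound d * pointBound d)))
    fun M N hM hN ↦ ?_
  have := freqBound_le hM hN
  push_cast [denomExponent]
  calc (k * (d ^ 2 * (freqBound d M * pointBound d)) : ℝ)
      ≤ k * (d ^ 2 * (2 * pointBound d * N * pointBound d)) := by gcongr
    _ = k * (d ^ 2 * (2 * pointBound d * pointBound d)) * N := by ring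

lemma hasGrowthOrder_monomialBound (hc : 1 ≤ c) :
    HasGrowthOrder d 1 fun M N ↦ monomialBound c d (freqBound d M) (pointBound d) N := by
  simpa only [monomialBound, zero_add, mul_comm (c : ℝ)] using
    (hasGrowthOrder_pow_denomExponent hc 2).mul (hasGrowthOrder_mul_freqBound_pow hc)

lemma hasGrowthOrder_coeffBound (hc : 1 ≤ c) (hd : d ≠ 0) :
    HasGrowthOrder d d fun M _ ↦ coeffBound c d (freqBound d M) (pointBound d) (d * M ^ d) := by
  have hpow : HasGrowthOrder d d fun M _ ↦ (freqBound d M * c : ℝ) ^ (d * M ^ d) := by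
    refine (one_mul d ▸ (hasGrowthOrder_mul_freqBound_pow hc).pow d).mono fun M N hM hN ↦
      ⟨by positivity, ?_⟩
    have hL : (1 : ℝ) ≤ freqBound d M := by exact_mod_cast freqBound_pos hd hM
    rw [mul_comm (freqBound d M : ℝ), ← pow_mul, mul_comm N]
    exact pow_le_pow_right₀ (one_le_mul_of_one_le_of_one_le hc hL) (by gcongr)
  have hconst : HasGrowthOrder d 0 fun _ _ ↦ c := .const (zero_le_one.trans hc)
  simpa only [coeffBound, monomialBound, zero_add] using hconst.mul <| hconst.mul <|
    hasGrowthOrder_freqBound_pow.mul <| (hasGrowthOrder_pow_denomExponent hc 2).mul hpow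

lemma hasGrowthOrder_derivBound (hc : 1 ≤ c) (hd : d ≠ 0) :
    HasGrowthOrder d (d + 2) fun M N ↦
      derivBound c d (freqBound d M) (pointBound d) N ((N : ℝ) ^ (d : ℝ)⁻¹)
        (coeffBound c d (freqBound d M) (pointBound d) (d * M ^ d)) := by
  have hexp : HasGrowthOrder d 0 fun M _ ↦
      Real.exp (d * (pointBound d * (c * freqBound d M))) := by
    refine .exp (A := d * (pointBound d * (c * (2 * pointBound d)))) fun M N hM hN ↦ ?_
    calc (d * (pointBound d * (c * freqBound d M)) : ℝ)
        ≤ d * (pointBound d * (c * (2 * pointBound d * N))) := by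
          gcongr
          exact freqBound_le hM hN
      _ = d * (pointBound d * (c * (2 * pointBound d))) * N := by ring
  have hexp' : HasGrowthOrder d 0 fun M N ↦
      Real.exp ((N : ℝ) ^ (d : ℝ)⁻¹ * (c * freqBound d M)) := by
    refine .exp (A := c * (2 * pointBound d)) fun M N _ hN ↦ ?_
    have hle := mul_freqBound_le hd (natCast_le_rpow_inv hd hN)
    rw [Real.rpow_inv_natCast_pow N.cast_nonneg hd] at hle
    rw [mul_left_comm, mul_assoc]
    gcongr
  have horder : 0 + (1 + (0 + (d + 0 + 1 + 0))) = d + 2 := by ring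
  exact horder ▸
    (HasGrowthOrder.pow_of_le_linear hc (A := 1) fun _ N _ _ ↦ (one_mul (N : ℝ)).ge).mul
    (HasGrowthOrder.factorial.mul <| hasGrowthOrder_freqBound_pow.mul <|
      (((hasGrowthOrder_coeffBound hc hd).mul hexp).mul
        (hasGrowthOrder_mul_freqBound_pow hc)).mul hexp')

lemma eventually_liouvilleProduct_lt_one (hc : 1 ≤ c) (hd : d ≠ 0) :
    ∀ᶠ M in atTop, ∀ N, M ^ d ≤ N → liouvilleProduct c d M N < 1 := by
  have hdenom := hasGrowthOrder_pow_denomExponent (d := d) hc 1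
  have hhouse := (hasGrowthOrder_freqBound_pow (d := d)).mul <|
    (hasGrowthOrder_coeffBound hc hd).mul (hasGrowthOrder_monomialBound hc)
  have horder : 0 + (d + 2) + (0 + (d + 1)) * (d - 1) = d ^ 2 + d + 1 := by
    obtain ⟨d, rfl⟩ := Nat.exists_eq_succ_of_ne_zero hd
    simp only [Nat.succ_eq_add_one, add_tsub_cancel_right]
    ring
  have htotal := horder ▸ (hdenom.mul (hasGrowthOrder_derivBound hc hd)).mul (hhouse.pow (d - 1))
  filter_upwards [htotal.eventually_mul_div_lt_one hd
    (B := (2 * pointBound d : ℝ) ^ gainExponent d) (by positivity)] with M hM N hN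
  rw [liouvilleProduct, two_mul_pointBound_div_pow hd]
  refine lt_of_eq_of_lt ?_ (hM N hN)
  rw [one_mul]
  ring

end Growth

/-! ### Algebraic values of the exponential function on conjugate sums -/

section Transcendence

open NumberField Module

variable {K : Type u} [Field K] {H I : Type u} [Fintype H] [Fintype I]

/-- The linear combination with coefficients `x` of the conjugates of `y` under `σ`. -/
def conjSum (ψ : K →+* ℂ) (σ : H → K →+* K) (x : H → ℂ) (y : K) : ℂ :=
  ∑ h, ψ (σ h y) * x h

variable {ψ : K →+* ℂ} {σ : H → K →+* K} {x : H → ℂ} {L : ℕ}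

lemma conjSum_latticePoint_mul (b : I → K) (l : I → Fin L) (y : K) :
    conjSum ψ σ x (latticePoint b l * y) = ∑ i, (l i : ℕ) * conjSum ψ σ x (b i * y) := by
  simp only [conjSum, latticePoint, sum_mul, map_sum, mul_sum]
  rw [sum_comm]
  refine sum_congr rfl fun i _ ↦ sum_congr rfl fun h _ ↦ ?_
  simp only [map_mul, map_natCast]
  ring

lemma norm_conjSum_latticePoint_mul_le (b : I → K) (l : I → Fin L) (y : K) :
    ‖conjSum ψ σ x (latticePoint b l * y)‖ ≤ L * ∑ i, ‖conjSum ψ σ x (b i * y)‖ := by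
  rw [conjSum_latticePoint_mul, mul_sum]
  refine norm_sum_le_of_le _ fun i _ ↦ ?_
  rw [norm_mul, Complex.norm_natCast]
  gcongr
  exact (l i).2.le

lemma embedding_prod_prod_pow {b : I → K} {α : I → I → K}
    (hα : ∀ i j, ψ (α i j) = Complex.exp (conjSum ψ σ x (b i * b j))) (l : I → Fin L)
    (r : I → ℕ) : ψ (∏ i, ∏ j, α i j ^ ((l i : ℕ) * r j)) =
      Complex.exp (∑ j, r j * conjSum ψ σ x (latticePoint b l * b j)) := by
  simp only [conjSum_latticePoint_mul, mul_sum, map_prod, map_pow, hα, Complex.exp_sum]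
  rw [Finset.prod_comm]
  refine prod_congr rfl fun j _ ↦ prod_congr rfl fun i _ ↦ ?_
  rw [← Complex.exp_nat_mul]
  push_cast
  ring_nf

lemma embedding_auxValue [DecidableEq I] {b : I → K} {α : I → I → K}
    (hα : ∀ i j, ψ (α i j) = Complex.exp (conjSum ψ σ x (b i * b j)))
    (ξ : (I → Fin L) → 𝓞 K) (τ : H → ℕ) (r : I → ℕ) :
    ψ (auxValue σ α b ξ τ r) = ∑ l, ψ (ξ l) *
      Complex.exp (∑ j, r j * conjSum ψ σ x (latticePoint b l * b j)) *
        ∏ h, ψ (σ h (latticePoint b l)) ^ τ h := by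
  rw [auxValue, map_sum]
  refine sum_congr rfl fun l _ ↦ ?_
  rw [auxMonomial, map_mul, map_mul, embedding_prod_prod_pow hα, map_prod]
  simp only [map_pow]
  ring

lemma exists_conjugate_eq_sum_conjSum [NumberField K] (ψ : K →+* ℂ)
    (hσ : Function.Injective σ) (hx : ∀ h, x h ≠ 0) (b : Basis I ℚ K) :
    ∃ p : H → I → ℂ, ∀ h y, ψ (σ h y) = ∑ j, p h j * conjSum ψ σ x (y * b j) := by
  classical
  obtain ⟨p, hp⟩ := exists_sum_mul_conjugate_eq_ite ψ hσ b
  refine ⟨fun h j ↦ (x h)⁻¹ * p h j, fun h y ↦ ?_⟩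
  calc ψ (σ h y)
      = (x h)⁻¹ * ∑ g, ψ (σ g y) * x g * ∑ j, p h j * ψ (σ g (b j)) := by
        simp only [hp, mul_ite, mul_one, mul_zero, sum_ite_eq', mem_univ, if_true]
        rw [mul_comm, mul_inv_cancel_right₀ (hx h)]
    _ = ∑ j, (x h)⁻¹ * p h j * conjSum ψ σ x (y * b j) := by
        simp only [conjSum, map_mul, mul_sum]
        rw [sum_comm]
        refine sum_congr rfl fun j _ ↦ sum_congr rfl fun g _ ↦ ?_
        ring

variable {b : I → K} {α : I → I → K} {ξ : (I → Fin L) → 𝓞 K} {S N : ℕ}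

lemma expSumDeriv_conjSum_eq_zero [DecidableEq I]
    (hα : ∀ i j, ψ (α i j) = Complex.exp (conjSum ψ σ x (b i * b j)))
    (hvanish : ∀ τ : H → ℕ, ∑ h, τ h < N → ∀ r : I → ℕ, (∀ j, r j < S) →
      auxValue σ α b ξ τ r = 0) {κ r : I → ℕ} (hκ : ∑ j, κ j < N) (hr : ∀ j, r j < S) :
    expSumDeriv (fun l ↦ ψ (ξ l)) (fun l j ↦ conjSum ψ σ x (latticePoint b l * b j)) κ r = 0 := by
  obtain ⟨C, hC⟩ := (Set.finite_range fun a : I × H ↦ ‖ψ (σ a.2 (b a.1)) * x a.2‖).bddAbove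
  have hlinear (l : I → Fin L) (j : I) : conjSum ψ σ x (latticePoint b l * b j) =
      ∑ h, ψ (σ h (b j)) * x h * ψ (σ h (latticePoint b l)) := by
    simp only [conjSum, map_mul]
    exact sum_congr rfl fun h _ ↦ by ring
  have hle := norm_sum_mul_prod_linear_pow_le (τ := κ) (U := 0)
    (w := fun l ↦ ψ (ξ l) *
      Complex.exp (∑ j, r j * conjSum ψ σ x (latticePoint b l * b j)))
    (z := fun l h ↦ ψ (σ h (latticePoint b l))) (fun j h ↦ hC ⟨(j, h), rfl⟩) fun τ hτ ↦ by
      rw [← embedding_auxValue hα, hvanish τ (hτ ▸ hκ) r hr, map_zero, norm_zero]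
  rw [mul_zero, norm_le_zero_iff] at hle
  rw [expSumDeriv, ← hle]
  exact sum_congr rfl fun l _ ↦ by simp only [hlinear]

/- Vanishing passes from the derivations `u ↦ ψ (σ h ·)` to the coordinate derivatives of the
exponential sum and the Schwarz estimate passes back, both by linear changes of variables. -/
lemma norm_embedding_auxValue_le [DecidableEq I] [Nonempty I] {e : ℕ} {c P R : ℝ} {p : H → I → ℂ}
    (hα : ∀ i j, ψ (α i j) = Complex.exp (conjSum ψ σ x (b i * b j)))
    (hp : ∀ h y, ψ (σ h y) = ∑ j, p h j * conjSum ψ σ x (y * b j))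
    (hc : 1 ≤ c) (hpc : ∀ h j, Fintype.card I * ‖p h j‖ ≤ c)
    (hbc : ∀ j, ∑ i, ‖conjSum ψ σ x (b i * b j)‖ ≤ c) (hL : 0 < L)
    (hS : S = Fintype.card I * e) (hR0 : 0 < R) (hR : 2 * (S : ℝ) ≤ R)
    (hξ : ∀ l, ‖ψ (ξ l)‖ ≤ P)
    (hvanish : ∀ τ : H → ℕ, ∑ h, τ h < N → ∀ r : I → ℕ, (∀ j, r j < S) →
      auxValue σ α b ξ τ r = 0)
    {τ : H → ℕ} {r : I → ℕ} (hτ : ∑ h, τ h = N) (hr : ∀ j, r j < S) :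
    ‖ψ (auxValue σ α b ξ τ r)‖ ≤
      derivBound c (Fintype.card I) L S N R P * (2 * S / R) ^ (N * e) := by
  have hI : (0 : ℝ) < Fintype.card I := by exact_mod_cast Fintype.card_pos
  have hY : 1 ≤ c * L := one_le_mul_of_one_le_of_one_le hc (by exact_mod_cast hL)
  have hz (l : I → Fin L) (j : I) : ‖conjSum ψ σ x (latticePoint b l * b j)‖ ≤ c * L := by
    rw [mul_comm c]
    exact (norm_conjSum_latticePoint_mul_le b l (b j)).trans (by gcongr; exact hbc j)
  have hle := norm_sum_mul_prod_linear_pow_le (τ := τ) (C := c / Fintype.card I)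
    (w := fun l ↦ ψ (ξ l) *
      Complex.exp (∑ j, r j * conjSum ψ σ x (latticePoint b l * b j)))
    (z := fun l j ↦ conjSum ψ σ x (latticePoint b l * b j))
    (fun h j ↦ by rw [le_div_iff₀' hI]; exact hpc h j) fun κ hκ ↦
      norm_expSumDeriv_le hS hY hR0 hR hξ hz
        (fun _ h _ h' ↦ expSumDeriv_conjSum_eq_zero hα hvanish h h') (hκ.trans hτ) hr
  simp only [← hp] at hle
  rw [embedding_auxValue hα]
  refine hle.trans_eq ?_
  rw [mul_div_cancel₀ _ hI.ne', hτ, derivBound]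
  simp only [Fintype.card_fun, Fintype.card_fin, Nat.cast_pow]
  ring

/- Take a nontrivial auxiliary function vanishing to high order at the points below `pointBound d`,
and its first nonvanishing derivative there, of order `N`. Its value is a nonzero algebraic number
with bounded conjugates and denominator, and it is small by the Schwarz lemma. -/
lemma exists_one_le_liouvilleProduct [NumberField K] [Nonempty H] [Nonempty I]
    {b : Basis I ℚ K} {D : ℤ} {c : ℝ} {p : H → I → ℂ} (hH : Fintype.card H < finrank ℚ K)
    (hα : ∀ i j, ψ (α i j) = Complex.exp (conjSum ψ σ x (b i * b j)))
    (hp : ∀ h y, ψ (σ h y) = ∑ j, p h j * conjSum ψ σ x (y * b j))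
    (hc : IsArithmeticBound b α D c) (hpc : ∀ h j, Fintype.card I * ‖p h j‖ ≤ c)
    (hbc : ∀ j, ∑ i, ‖conjSum ψ σ x (b i * b j)‖ ≤ c) {M : ℕ}
    (hM : 2 * pointBound (finrank ℚ K) ≤ M) :
    ∃ N, M ^ finrank ℚ K ≤ N ∧ 1 ≤ liouvilleProduct c (finrank ℚ K) M N := by
  classical
  have hd : finrank ℚ K ≠ 0 := finrank_pos.ne'
  have hcard : finrank ℚ K = Fintype.card I := finrank_eq_card_basis b
  rw [hcard] at hH hM hd ⊢
  have hS := pointBound_pos hd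
  have hM0 : 0 < M := by omega
  have hL := freqBound_pos hd hM0
  obtain ⟨ξ, hξ0, hξ, hzero⟩ := hc.exists_auxValue_eq_zero (σ := σ) hL
    (Nat.mul_le_mul_right _ hH.le) (two_mul_pow_mul_pointBound_le hd hM0 hH)
  obtain ⟨τ, r, hr, hne, hmin⟩ := exists_minimal_auxValue_ne_zero σ α b hξ0 hS
  have hN : M ^ Fintype.card I ≤ ∑ h, τ h := by
    by_contra! hlt
    exact hne (hzero τ r
      (fun h ↦ (single_le_sum_of_canonicallyOrdered (mem_univ h)).trans_lt hlt) hr)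
  have hMR := natCast_le_rpow_inv hd hN
  have hupper := norm_embedding_auxValue_le (S := pointBound (Fintype.card I)) hα hp hc.one_le hpc
    hbc hL rfl (lt_of_lt_of_le (by exact_mod_cast hM0) hMR)
    (le_trans (by exact_mod_cast hM) hMR)
    (fun l ↦ (norm_embedding_le_house _ ψ).trans (hξ l)) hmin rfl hr
  have hlower := hc.one_le_mul_norm_auxValue hξ hr hne ψ
  rw [hcard] at hlower
  refine ⟨_, hN, hlower.trans ?_⟩
  have hc0 : 0 ≤ c := zero_le_one.trans hc.one_le
  unfold liouvilleProduct
  gcongr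
  unfold coeffBound monomialBound
  positivity

theorem exists_exp_conjSum_notMem_range [NumberField K] [Nonempty H] (ψ : K →+* ℂ)
    (hσ : Function.Injective σ) (hH : Fintype.card H < finrank ℚ K) (hx : ∀ h, x h ≠ 0) :
    ∃ y : 𝓞 K, Complex.exp (conjSum ψ σ x y) ∉ Set.range ψ := by
  by_contra! halg
  let b := integralBasis K
  have hb (i) : IsIntegral ℤ (b i) := by
    rw [integralBasis_apply]
    exact RingOfIntegers.isIntegral_coe _
  have hint (i j) : IsIntegral ℤ (b i * b j) := (hb i).mul (hb j)
  choose α hα using fun i j ↦ halg ⟨b i * b j, hint i j⟩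
  have : Nonempty (Free.ChooseBasisIndex ℤ (𝓞 K)) := b.index_nonempty
  obtain ⟨p, hp⟩ := exists_conjugate_eq_sum_conjSum ψ hσ hx b
  obtain ⟨D, hD⟩ := exists_eventually_isArithmeticBound hb α
  obtain ⟨c, hc, hpc, hbc⟩ := (hD.and <| .and
    (eventually_all.2 fun h ↦ eventually_all.2 fun j ↦ eventually_ge_atTop (_ * ‖p h j‖))
    (eventually_all.2 fun j ↦ eventually_ge_atTop (∑ i, ‖conjSum ψ σ x (b i * b j)‖))).exists
  obtain ⟨M, hMsmall, hM⟩ :=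
    ((eventually_liouvilleProduct_lt_one hc.one_le (finrank_pos (R := ℚ) (M := K)).ne').and
      (eventually_ge_atTop (2 * pointBound (finrank ℚ K)))).exists
  obtain ⟨N, hN, hlarge⟩ := exists_one_le_liouvilleProduct hH hα hp hc hpc hbc hM
  exact (hMsmall N hN).not_ge hlarge

/- The set of those `g` with `x g ≠ 0` has fewer elements than the degree of `K`. -/
theorem eq_zero_of_forall_exp_sum_mem_range [NumberField K] (ψ : K →+* ℂ) {x : (K ≃ₐ[ℚ] K) → ℂ}
    (hexp : ∀ y : 𝓞 K, Complex.exp (∑ g, ψ (g y) * x g) ∈ Set.range ψ) {g₀ : K ≃ₐ[ℚ] K}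
    (hg₀ : x g₀ = 0) : x = 0 := by
  classical
  by_contra hx
  obtain ⟨g₁, hg₁⟩ := Function.ne_iff.1 hx
  have : Nonempty {g // x g ≠ 0} := ⟨g₁, hg₁⟩
  have hinj : Function.Injective fun g : {g // x g ≠ 0} ↦ ((g : K ≃ₐ[ℚ] K) : K →+* K) :=
    fun g h hgh ↦ Subtype.ext (AlgEquiv.ext fun y ↦ congrArg (fun f : K →+* K ↦ f y) hgh)
  have hcard : Fintype.card {g // x g ≠ 0} < finrank ℚ K :=
    (Fintype.card_subtype_lt (x := g₀) (by simpa using hg₀)).trans_le (AlgEquiv.card_le)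
  obtain ⟨y, hy⟩ := exists_exp_conjSum_notMem_range ψ hinj hcard fun g ↦ g.2
  refine hy ?_
  convert hexp y using 2
  calc ∑ g : {g // x g ≠ 0}, ψ (g.1 y) * x g
      = ∑ g with x g ≠ 0, ψ (g y) * x g := by
        rw [← sum_subtype_eq_sum_filter, subtype_univ]
    _ = ∑ g, ψ (g y) * x g := sum_filter_of_ne fun g _ ↦ right_ne_zero_of_mul

end Transcendence

/-! ### Periodic functions and logarithms of cyclotomic numbers -/

section LogSeries

variable {z : ℂ}

lemma one_sub_mem_slitPlane (hz : ‖z‖ ≤ 1) (hz1 : z ≠ 1) : 1 - z ∈ Complex.slitPlane := by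
  left
  rw [Complex.sub_re, Complex.one_re, sub_pos]
  refine ((Complex.re_le_norm z).trans hz).lt_of_ne fun hre ↦ hz1 ?_
  have hnorm : ‖z‖ = 1 := hz.antisymm (hre ▸ Complex.re_le_norm z)
  have him : z.im = 0 := Complex.abs_re_eq_norm.1 (by rw [hre, abs_one, hnorm])
  exact Complex.ext hre him

lemma cauchySeq_sum_range_pow_div (hz : ‖z‖ ≤ 1) (hz1 : z ≠ 1) :
    CauchySeq fun N : ℕ ↦ ∑ n ∈ range N, z ^ n / n := by
  have hdecr : Antitone fun n : ℕ ↦ 1 / ((n : ℝ) + 1) := fun _ _ h ↦ Nat.one_div_le_one_div h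
  have hgeom (n : ℕ) : ‖∑ i ∈ range n, z ^ (i + 1)‖ ≤ 2 / ‖z - 1‖ := by
    simp only [pow_succ', ← mul_sum]
    rw [geom_sum_eq hz1, norm_mul, norm_div]
    refine (mul_le_of_le_one_left (by positivity) hz).trans ?_
    gcongr
    calc ‖z ^ n - 1‖ ≤ ‖z‖ ^ n + 1 := by simpa using norm_sub_le (z ^ n) 1
      _ ≤ 2 := by linarith [pow_le_one₀ (norm_nonneg z) hz (n := n)]
  rw [← cauchySeq_shift 1]
  convert hdecr.cauchySeq_series_mul_of_tendsto_zero_of_bounded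
    tendsto_one_div_add_atTop_nhds_zero_nat hgeom using 2 with N
  rw [sum_range_succ']
  simp only [Complex.real_smul, Nat.cast_zero, div_zero, add_zero]
  exact sum_congr rfl fun n _ ↦ by push_cast; ring

theorem tendsto_sum_range_pow_div (hz : ‖z‖ ≤ 1) (hz1 : z ≠ 1) :
    Tendsto (fun N : ℕ ↦ ∑ n ∈ range N, z ^ n / n) atTop (𝓝 (-Complex.log (1 - z))) := by
  obtain ⟨l, hl⟩ := cauchySeq_tendsto_of_complete (cauchySeq_sum_range_pow_div hz hz1)
  have hcont : ContinuousAt (fun x : ℝ ↦ -Complex.log (1 - z * (x : ℂ))) 1 :=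
    .neg (.clog (by fun_prop) (by simpa using one_sub_mem_slitPlane hz hz1))
  have hlog : Tendsto (fun x : ℝ ↦ -Complex.log (1 - z * (x : ℂ))) (𝓝[<] 1)
      (𝓝 (-Complex.log (1 - z))) := by
    simpa using hcont.tendsto.mono_left (nhdsWithin_le_nhds (s := Set.Iio 1))
  have habel := tendsto_map'_iff.1 (Complex.tendsto_tsum_powerSeries_nhdsWithin_lt hl)
  suffices Tendsto (fun x : ℝ ↦ -Complex.log (1 - z * (x : ℂ))) (𝓝[<] 1) (𝓝 l) from
    tendsto_nhds_unique hlog this ▸ hl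
  refine habel.congr' ?_
  filter_upwards [Ioo_mem_nhdsLT (zero_lt_one' ℝ)] with x hx
  have hzx : ‖z * (x : ℂ)‖ < 1 := by
    rw [norm_mul, Complex.norm_real, Real.norm_of_nonneg hx.1.le]
    exact (mul_le_of_le_one_left hx.1.le hz).trans_lt hx.2
  rw [← (Complex.hasSum_taylorSeries_neg_log hzx).tsum_eq]
  exact tsum_congr fun n ↦ by rw [mul_pow]; ring

end LogSeries

section PeriodicSeries

open ZMod

variable {q : ℕ} [NeZero q]

lemma stdAddChar_ne_one {a : ZMod q} (ha : a ≠ 0) : stdAddChar a ≠ 1 := by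
  rw [← AddChar.map_zero_eq_one (stdAddChar (N := q))]
  exact injective_stdAddChar.ne ha

/-- The linear form in logarithms `∑ f̂(a) log (1 - e(a / q))`, over nonzero `a` modulo `q`,
attached to a function modulo `q`. It is `-q` times the sum of the series `∑ f(n) / n` when the
latter converges. -/
noncomputable def dftLogSum (f : ZMod q → ℂ) : ℂ :=
  ∑ a ∈ univ.erase 0, 𝓕 f a * Complex.log (1 - stdAddChar a)

lemma apply_natCast_eq_sum_dft {f : ZMod q → ℂ} (hf : ∑ a, f a = 0) (n : ℕ) :
    f n = (q : ℂ)⁻¹ * ∑ a ∈ univ.erase 0, 𝓕 f a * stdAddChar a ^ n := by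
  have hinv := invDFT_apply (𝓕 f) n
  rw [LinearEquiv.symm_apply_apply, ← add_sum_erase _ _ (mem_univ 0), dft_apply_zero, hf, smul_zero,
    zero_add] at hinv
  rw [hinv, smul_eq_mul]
  congr 1
  refine sum_congr rfl fun a _ ↦ ?_
  rw [← AddChar.map_nsmul_eq_pow, nsmul_eq_mul, smul_eq_mul, mul_comm, mul_comm a]

theorem tendsto_sum_range_div_of_sum_eq_zero {f : ZMod q → ℂ} (hf : ∑ a, f a = 0) :
    Tendsto (fun N : ℕ ↦ ∑ n ∈ range N, f n / n) atTop (𝓝 (-(q : ℂ)⁻¹ * dftLogSum f)) := by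
  have hpartial (N : ℕ) : ∑ n ∈ range N, f n / n =
      (q : ℂ)⁻¹ * ∑ a ∈ univ.erase 0, 𝓕 f a * ∑ n ∈ range N, stdAddChar a ^ n / (n : ℂ) := by
    simp only [apply_natCast_eq_sum_dft hf, mul_sum, sum_div]
    rw [sum_comm]
    exact sum_congr rfl fun a _ ↦ sum_congr rfl fun n _ ↦ by ring
  simp only [hpartial]
  rw [dftLogSum, neg_mul, ← mul_neg, ← sum_neg_distrib]
  refine (tendsto_finsetSum _ fun a ha ↦ ?_).const_mul _
  rw [← mul_neg]
  have hnorm : ‖stdAddChar a‖ ≤ 1 := by rw [stdAddChar_apply, Circle.norm_coe]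
  exact (tendsto_sum_range_pow_div hnorm (stdAddChar_ne_one (ne_of_mem_erase ha))).const_mul _

lemma not_tendsto_const_mul_sum_range_inv {c : ℂ} (hc : c ≠ 0) (l : ℂ) :
    ¬Tendsto (fun N : ℕ ↦ c * ∑ n ∈ range N, (n : ℂ)⁻¹) atTop (𝓝 l) := by
  intro hl
  have hharmonic : Tendsto (fun N : ℕ ↦ ∑ n ∈ range N, (n : ℝ)⁻¹) atTop atTop := by
    rw [← tendsto_add_atTop_iff_nat 1]
    refine Real.tendsto_sum_range_one_div_nat_succ_atTop.congr fun N ↦ ?_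
    simp [sum_range_succ']
  have hnorm (N : ℕ) : ‖c * ∑ n ∈ range N, (n : ℂ)⁻¹‖ = ‖c‖ * ‖∑ n ∈ range N, (n : ℝ)⁻¹‖ := by
    rw [norm_mul, ← Complex.norm_real]
    push_cast
    rfl
  refine not_tendsto_nhds_of_tendsto_atTop ?_ _ hl.norm
  simp only [hnorm]
  exact (tendsto_norm_atTop_atTop.comp hharmonic).const_mul_atTop (norm_pos_iff.2 hc)

theorem sum_eq_zero_of_tendsto_sum_range_div {f : ZMod q → ℂ} {l : ℂ}
    (hf : Tendsto (fun N : ℕ ↦ ∑ n ∈ range N, f n / n) atTop (𝓝 l)) : ∑ a, f a = 0 := by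
  have hq : (q : ℂ) ≠ 0 := NeZero.ne _
  set mean := (∑ a, f a) / q with hmean
  have hcentred : ∑ a, (f a - mean) = 0 := by
    rw [sum_sub_distrib, sum_const, card_univ, ZMod.card, nsmul_eq_mul, hmean,
      mul_div_cancel₀ _ hq, sub_self]
  have hdiff := hf.sub (tendsto_sum_range_div_of_sum_eq_zero hcentred)
  simp only [← sum_sub_distrib, ← sub_div, sub_sub_cancel, div_eq_mul_inv mean, ← mul_sum] at hdiff
  by_contra hne
  exact not_tendsto_const_mul_sum_range_inv (div_ne_zero hne hq) _ hdiff

lemma dftLogSum_eq_zero_of_tendsto {f : ZMod q → ℂ}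
    (hf : Tendsto (fun N : ℕ ↦ ∑ n ∈ range N, f n / n) atTop (𝓝 0)) : dftLogSum f = 0 := by
  have hlim := tendsto_sum_range_div_of_sum_eq_zero (sum_eq_zero_of_tendsto_sum_range_div hf)
  have hq : -(q : ℂ)⁻¹ ≠ 0 := neg_ne_zero.2 (inv_ne_zero (NeZero.ne _))
  exact (mul_eq_zero.1 (tendsto_nhds_unique hlim hf)).resolve_left hq

end PeriodicSeries

section GaloisAction

open ZMod NumberField

variable {q : ℕ} [NeZero q] {K : Type*} [Field K]

lemma isPrimitiveRoot_stdAddChar_one : IsPrimitiveRoot (stdAddChar (1 : ZMod q)) q := by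
  refine IsPrimitiveRoot.iff_def _ _ |>.2 ⟨?_, fun l hl ↦ ?_⟩
  · rw [← AddChar.map_nsmul_eq_pow, nsmul_one, natCast_self, AddChar.map_zero_eq_one]
  · rw [← AddChar.map_nsmul_eq_pow, nsmul_one,
      ← AddChar.map_zero_eq_one (stdAddChar (N := q))] at hl
    exact (natCast_eq_zero_iff _ _).1 (injective_stdAddChar hl)

lemma exists_embedding_zmodChar_eq [Algebra ℚ K] [IsCyclotomicExtension {q} ℚ K] {ζ : K}
    (hζ : IsPrimitiveRoot ζ q) :
    ∃ ψ : K →+* ℂ, ∀ a, ψ (AddChar.zmodChar q hζ.pow_eq_one a) = stdAddChar a := by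
  have hirr := Polynomial.cyclotomic.irreducible_rat (NeZero.pos q)
  let e := hζ.embeddingsEquivPrimitiveRoots ℂ hirr
  let ψ := e.symm ⟨_, (mem_primitiveRoots (NeZero.pos q)).2 isPrimitiveRoot_stdAddChar_one⟩
  have hψ : ψ ζ = stdAddChar (1 : ZMod q) := by
    rw [← hζ.embeddingsEquivPrimitiveRoots_apply_coe ℂ hirr, Equiv.apply_symm_apply]
  refine ⟨ψ, fun a ↦ ?_⟩
  rw [AddChar.zmodChar_apply, map_pow, RingHom.coe_coe, hψ, ← AddChar.map_nsmul_eq_pow]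
  simp

lemma aut_zmodChar_eq [Algebra ℚ K] {ζ : K} (hζ : IsPrimitiveRoot ζ q) (g : K ≃ₐ[ℚ] K)
    (a : ZMod q) : g (AddChar.zmodChar q hζ.pow_eq_one a) =
      AddChar.zmodChar q hζ.pow_eq_one (hζ.autToPow ℚ g * a) := by
  rw [AddChar.zmodChar_apply, map_pow, ← hζ.autToPow_spec ℚ g, ← pow_mul,
    ← AddChar.zmodChar_apply' hζ.pow_eq_one]
  simp

lemma embedding_aut_dft [Algebra ℚ K] {ζ : K} {ψ : K →+* ℂ} (hζ : IsPrimitiveRoot ζ q)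
    (hψ : ∀ a, ψ (AddChar.zmodChar q hζ.pow_eq_one a) = stdAddChar a) (f : ZMod q → ℤ)
    (g : K ≃ₐ[ℚ] K) (a : ZMod q) :
    ψ (g (∑ n, AddChar.zmodChar q hζ.pow_eq_one (-(n * a)) * f n)) =
      𝓕 (fun n ↦ (f n : ℂ)) (hζ.autToPow ℚ g * a) := by
  simp only [dft_apply, map_sum, map_mul, aut_zmodChar_eq hζ, hψ, map_intCast, smul_eq_mul]
  exact sum_congr rfl fun n _ ↦ by ring_nf

lemma exists_int_sum_aut_eq [NumberField K] [IsGalois ℚ K] {y : K} (hy : IsIntegral ℤ y) :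
    ∃ t : ℤ, ∑ g : K ≃ₐ[ℚ] K, g y = t := by
  obtain ⟨t, ht⟩ :=
    IsIntegrallyClosed.isIntegral_iff.1 (Algebra.isIntegral_trace (L := ℚ) hy)
  refine ⟨t, ?_⟩
  rw [← trace_eq_sum_automorphisms, ← ht]
  simp

/- Summing over the Galois group turns the coefficients of the logarithms into traces of algebraic
integers, so that the exponential is a product of integral powers of the numbers `1 - e(a / q)`. -/
lemma exp_sum_dft_mem_range [NumberField K] [IsCyclotomicExtension {q} ℚ K] {ζ : K} {ψ : K →+* ℂ}
    (hζ : IsPrimitiveRoot ζ q)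
    (hψ : ∀ a, ψ (AddChar.zmodChar q hζ.pow_eq_one a) = stdAddChar a) (f : ZMod q → ℤ) (y : 𝓞 K) :
    Complex.exp (∑ g : K ≃ₐ[ℚ] K, ψ (g y) * ∑ a ∈ univ.erase 0,
      𝓕 (fun n ↦ (f n : ℂ)) (hζ.autToPow ℚ g * a) * Complex.log (1 - stdAddChar a)) ∈
        Set.range ψ := by
  have : IsGalois ℚ K := IsCyclotomicExtension.isGalois {q} ℚ K
  let χ := AddChar.zmodChar q hζ.pow_eq_one
  have hχ (a) : IsIntegral ℤ (χ a) := (hζ.isIntegral (NeZero.pos q)).pow _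
  have hint (a) : IsIntegral ℤ (y * ∑ n, χ (-(n * a)) * f n) :=
    (RingOfIntegers.isIntegral_coe y).mul
      (.sum _ fun n _ ↦ (hχ _).mul (isIntegral_algebraMap (R := ℤ) (x := f n)))
  choose t ht using fun a ↦ exists_int_sum_aut_eq (hint a)
  have hexponent : ∑ g : K ≃ₐ[ℚ] K, ψ (g y) * ∑ a ∈ univ.erase 0,
      𝓕 (fun n ↦ (f n : ℂ)) (hζ.autToPow ℚ g * a) * Complex.log (1 - stdAddChar a) =
        ∑ a ∈ univ.erase 0, t a * Complex.log (1 - stdAddChar a) := by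
    simp only [mul_sum]
    rw [sum_comm]
    refine sum_congr rfl fun a _ ↦ ?_
    rw [← map_intCast ψ, ← ht, map_sum, sum_mul]
    simp only [map_mul, ← embedding_aut_dft hζ hψ, mul_assoc, χ]
  refine ⟨∏ a ∈ univ.erase 0, (1 - χ a) ^ t a, ?_⟩
  rw [hexponent, Complex.exp_sum, map_prod]
  refine prod_congr rfl fun a ha ↦ ?_
  rw [Complex.exp_int_mul,
    Complex.exp_log (sub_ne_zero.2 (stdAddChar_ne_one (ne_of_mem_erase ha)).symm), map_zpow₀,
    map_sub, map_one, hψ]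

theorem dftLogSum_comp_unitMul_eq_zero {f : ZMod q → ℤ} (hf : dftLogSum (fun n ↦ (f n : ℂ)) = 0)
    (u : (ZMod q)ˣ) : dftLogSum (fun n ↦ (f (u.val * n) : ℂ)) = 0 := by
  have : IsCyclotomicExtension {q} ℚ (CyclotomicField q ℚ) := by
    rw [Subsingleton.elim DivisionRing.toRatAlgebra (CyclotomicField.algebra q ℚ)]
    exact CyclotomicField.isCyclotomicExtension q ℚ
  have hζ := IsCyclotomicExtension.zeta_spec q ℚ (CyclotomicField q ℚ)
  have hirr := Polynomial.cyclotomic.irreducible_rat (NeZero.pos q)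
  obtain ⟨ψ, hψ⟩ := exists_embedding_zmodChar_eq hζ
  have hzero := eq_zero_of_forall_exp_sum_mem_range ψ (exp_sum_dft_mem_range hζ hψ f) (g₀ := 1)
    (by simpa [dftLogSum] using hf)
  have hu := congrFun hzero ((IsCyclotomicExtension.autEquivPow _ hirr).symm u⁻¹)
  have hpow : hζ.autToPow ℚ ((IsCyclotomicExtension.autEquivPow _ hirr).symm u⁻¹) = u⁻¹ :=
    (IsCyclotomicExtension.autEquivPow _ hirr).apply_symm_apply _
  rw [hpow] at hu
  refine (sum_congr rfl fun a _ ↦ by rw [dft_comp_unitMul (fun n ↦ (f n : ℂ))]).trans hu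

end GaloisAction

/-! ### Passing to integers composed of the primes dividing the modulus -/

section AbelianTheorem

lemma sum_range_succ_div_eq_sum_Icc {𝕜 : Type*} [DivisionRing 𝕜] (c : ℕ → 𝕜) (N : ℕ) :
    ∑ n ∈ range (N + 1), c n / n = ∑ n ∈ Icc 1 N, c n / n := by
  rw [range_eq_Ico, sum_eq_sum_Ico_succ_bot N.succ_pos, Nat.cast_zero, div_zero, zero_add]
  rfl

lemma norm_integral_mul_cpow_le {S : ℝ → ℂ} {B T η ε : ℝ} (hε : 0 < ε) (hT : 1 ≤ T) (hη : 0 ≤ η)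
    (hB : ∀ t, ‖S t‖ ≤ B) (hS : ∀ t, T ≤ t → ‖S t‖ ≤ η) :
    ‖∫ t in Set.Ioi (1 : ℝ), S t * (t : ℂ) ^ (-((ε : ℂ) + 1))‖ ≤ η / ε + B * (T - 1) := by
  have hint : MeasureTheory.IntegrableOn (fun t : ℝ ↦ η * t ^ (-(ε + 1))) (Set.Ioi 1) :=
    ((integrableOn_Ioi_rpow_iff one_pos).2 (by linarith)).const_mul _
  have hint' : MeasureTheory.IntegrableOn ((Set.Ioc 1 T).indicator fun _ ↦ B) (Set.Ioi 1) :=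
    (MeasureTheory.integrable_indicator_iff measurableSet_Ioc).2
      (MeasureTheory.integrableOn_const (by simp)) |>.integrableOn
  calc ‖∫ t in Set.Ioi (1 : ℝ), S t * (t : ℂ) ^ (-((ε : ℂ) + 1))‖
      ≤ ∫ t in Set.Ioi (1 : ℝ), (η * t ^ (-(ε + 1)) + (Set.Ioc 1 T).indicator (fun _ ↦ B) t) := by
        refine MeasureTheory.norm_integral_le_of_norm_le (hint.add hint') ?_
        refine (MeasureTheory.ae_restrict_iff' measurableSet_Ioi).2 (.of_forall fun t ht ↦ ?_)
        have ht0 : 0 < t := zero_lt_one.trans ht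
        rw [norm_mul, Complex.norm_cpow_eq_rpow_re_of_pos ht0]
        simp only [Complex.neg_re, Complex.add_re, Complex.ofReal_re, Complex.one_re]
        by_cases htT : t ≤ T
        · have hmem : t ∈ Set.Ioc 1 T := ⟨ht, htT⟩
          rw [Set.indicator_of_mem hmem]
          have hpow : t ^ (-(ε + 1)) ≤ 1 :=
            Real.rpow_le_one_of_one_le_of_nonpos (le_of_lt ht) (by linarith)
          have hle : ‖S t‖ * t ^ (-(ε + 1)) ≤ B :=
            (mul_le_of_le_one_right (norm_nonneg _) hpow).trans (hB t)
          have : 0 ≤ η * t ^ (-(ε + 1)) := by positivity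
          linarith
        · have hmem : t ∉ Set.Ioc 1 T := fun h ↦ htT h.2
          rw [Set.indicator_of_notMem hmem, add_zero]
          gcongr
          exact hS t (le_of_not_ge htT)
    _ = η / ε + B * (T - 1) := by
        rw [MeasureTheory.integral_add hint hint', MeasureTheory.integral_const_mul,
          integral_Ioi_rpow_of_lt (by linarith) one_pos,
          MeasureTheory.setIntegral_indicator measurableSet_Ioc,
          Set.inter_eq_right.2 fun _ h ↦ h.1, MeasureTheory.setIntegral_const,
          Real.volume_real_Ioc_of_le hT, Real.one_rpow, neg_add, neg_add_cancel_right,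
          neg_div_neg_eq, smul_eq_mul]
        ring

theorem tendsto_LSeries_of_tendsto_sum_Icc {c : ℕ → ℂ}
    (hc : Tendsto (fun n : ℕ ↦ ∑ k ∈ Icc 1 n, c k) atTop (𝓝 0))
    (hsum : ∀ ε : ℝ, 0 < ε → LSeriesSummable c ε) :
    Tendsto (fun ε : ℝ ↦ LSeries c ε) (𝓝[>] 0) (𝓝 0) := by
  obtain ⟨B, hB⟩ := hc.norm.bddAbove_range
  have hB (n : ℕ) : ‖∑ k ∈ Icc 1 n, c k‖ ≤ B := hB ⟨n, rfl⟩
  have hO : (fun n : ℕ ↦ ∑ k ∈ Icc 1 n, c k) =O[atTop] fun n : ℕ ↦ (n : ℝ) ^ (0 : ℝ) :=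
    .of_bound B (.of_forall fun n ↦ by simpa using hB n)
  rw [Metric.tendsto_nhds]
  intro η hη
  obtain ⟨T, hT⟩ := Metric.tendsto_atTop.1 hc (η / 2) (half_pos hη)
  have hsmall : ∀ᶠ ε : ℝ in 𝓝[>] 0, ε * (B * T) < η / 2 := by
    have hcont : Continuous fun ε : ℝ ↦ ε * (B * T) := by fun_prop
    exact ((hcont.tendsto 0).mono_left nhdsWithin_le_nhds).eventually_lt_const (by simpa using hη)
  filter_upwards [hsmall, self_mem_nhdsWithin] with ε hεT hε
  have hε : 0 < ε := hε
  rw [dist_zero_right, LSeries_eq_mul_integral c le_rfl (by simpa using hε) (hsum ε hε) hO,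
    norm_mul, Complex.norm_of_nonneg hε.le]
  have hbound := norm_integral_mul_cpow_le (S := fun t ↦ ∑ k ∈ Icc 1 ⌊t⌋₊, c k) (T := T + 1) hε
    (by simp) (half_pos hη).le (fun t ↦ hB _) fun t ht ↦
      (dist_zero_right (∑ k ∈ Icc 1 ⌊t⌋₊, c k) ▸ hT ⌊t⌋₊ (Nat.le_floor (by linarith))).le
  calc ε * _ ≤ ε * (η / 2 / ε + B * (T + 1 - 1)) := mul_le_mul_of_nonneg_left hbound hε.le
    _ = η / 2 + ε * (B * T) := by field_simp; ring
    _ < η := by linarith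

end AbelianTheorem

section FactoredBy

/-- The positive integers all of whose prime factors divide `q`. -/
abbrev factoredBy (q : ℕ) : Set ℕ := Nat.factoredNumbers q.primeFactors

variable {q : ℕ}

lemma one_mem_factoredBy : 1 ∈ factoredBy q := by
  simp [Nat.mem_factoredNumbers_iff_primeFactors_subset]

lemma coprime_of_mem_factoredBy {m k : ℕ} (hm : m ∈ factoredBy q) (hk : k.Coprime q) :
    m.Coprime k :=
  Nat.coprime_of_dvd fun _ hp hpm hpk ↦ hp.not_dvd_one <| hk ▸ Nat.dvd_gcd hpk
    (Nat.dvd_of_mem_primeFactors (Nat.mem_factoredNumbers'.1 hm _ hp hpm))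

lemma exists_mem_factoredBy_mul_eq (hq : q ≠ 0) {n : ℕ} (hn : n ≠ 0) :
    ∃ m ∈ factoredBy q, ∃ k, k.Coprime q ∧ m * k = n := by
  induction n using Nat.recOnMul with
  | zero => exact absurd rfl hn
  | one => exact ⟨1, one_mem_factoredBy, 1, Nat.coprime_one_left q, one_mul 1⟩
  | prime p hp =>
    by_cases hpq : p ∣ q
    · have hmem : p ∈ factoredBy q := by
        rw [Nat.mem_factoredNumbers_iff_primeFactors_subset, hp.primeFactors]
        simpa [hp.ne_zero] using ⟨hp, hpq, hq⟩
      exact ⟨p, hmem, 1, Nat.coprime_one_left q, mul_one p⟩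
    · exact ⟨1, one_mem_factoredBy, p, hp.coprime_iff_not_dvd.2 hpq, one_mul p⟩
  | mul a b iha ihb =>
    obtain ⟨m, hm, k, hk, rfl⟩ := iha (left_ne_zero_of_mul hn)
    obtain ⟨m', hm', k', hk', rfl⟩ := ihb (right_ne_zero_of_mul hn)
    exact ⟨m * m', Nat.mul_mem_factoredNumbers hm hm', k * k', hk.mul_left hk', by ring⟩

lemma eq_of_mul_eq_mul_of_mem_factoredBy {m k m' k' : ℕ} (hm : m ∈ factoredBy q)
    (hm' : m' ∈ factoredBy q) (hk : k.Coprime q) (hk' : k'.Coprime q) (h : m * k = m' * k') :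
    m = m' ∧ k = k' := by
  have hmm' : m = m' := Nat.dvd_antisymm
    ((coprime_of_mem_factoredBy hm hk').dvd_of_dvd_mul_right (h ▸ Dvd.intro _ rfl))
    ((coprime_of_mem_factoredBy hm' hk).dvd_of_dvd_mul_right (h ▸ Dvd.intro _ rfl))
  subst hmm'
  exact ⟨rfl, Nat.eq_of_mul_eq_mul_left
    (Nat.pos_of_ne_zero (Nat.ne_zero_of_mem_factoredNumbers hm)) h⟩

lemma summable_factoredNumbers_rpow (s : Finset ℕ) {x : ℝ} (hx : 0 < x) :
    Summable fun m : Nat.factoredNumbers s ↦ ((m : ℕ) : ℝ) ^ (-x) := by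
  let F : ℕ →* ℝ :=
    { toFun := fun n ↦ (n : ℝ) ^ (-x)
      map_one' := by simp
      map_mul' := fun a b ↦ by
        rw [Nat.cast_mul, Real.mul_rpow a.cast_nonneg b.cast_nonneg] }
  refine (EulerProduct.summable_and_hasSum_factoredNumbers_prod_filter_prime_geometric (f := F)
    (fun {p} hp ↦ ?_) s).1.of_norm
  change ‖(p : ℝ) ^ (-x)‖ < 1
  rw [Real.norm_of_nonneg (by positivity)]
  exact Real.rpow_lt_one_of_one_lt_of_neg (by exact_mod_cast hp.one_lt) (neg_lt_zero.2 hx)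

lemma cast_totient_eq_mul_prod (n : ℕ) :
    (n.totient : ℝ) = n * ∏ p ∈ n.primeFactors, (1 - (p : ℝ)⁻¹) := by
  have hcast := congrArg (fun x : ℚ ↦ (x : ℝ)) (Nat.totient_eq_mul_prod_factors n)
  push_cast at hcast
  exact hcast

lemma hasSum_factoredBy_inv (hq : q ≠ 0) :
    HasSum (fun m : factoredBy q ↦ ((m : ℕ) : ℝ)⁻¹) (q / q.totient) := by
  let F : ℕ →* ℝ :=
    { toFun := fun n ↦ (n : ℝ)⁻¹
      map_one' := by simp
      map_mul' := fun a b ↦ by rw [Nat.cast_mul, mul_inv] }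
  have heuler := (EulerProduct.summable_and_hasSum_factoredNumbers_prod_filter_prime_geometric
    (f := F) (fun {p} hp ↦ by
      change ‖(p : ℝ)⁻¹‖ < 1
      rw [norm_inv, Real.norm_natCast]
      exact inv_lt_one_of_one_lt₀ (by exact_mod_cast hp.one_lt)) q.primeFactors).2
  rw [filter_true_of_mem fun p ↦ Nat.prime_of_mem_primeFactors, prod_inv_distrib] at heuler
  rwa [cast_totient_eq_mul_prod, ← div_div, div_self (Nat.cast_ne_zero.2 hq), one_div]

end FactoredBy

section CharacterDecomposition

variable {q : ℕ} [NeZero q] {χ : DirichletCharacter ℂ q} {g : ZMod q → ℂ}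

lemma exists_norm_le_of_finite {α E : Type*} [Finite α] [SeminormedAddGroup E] (g : α → E) :
    ∃ B, ∀ a, ‖g a‖ ≤ B := by
  obtain ⟨B, hB⟩ := (Set.finite_range fun a ↦ ‖g a‖).bddAbove
  exact ⟨B, fun a ↦ hB ⟨a, rfl⟩⟩

lemma convolution_indicator_factoredBy
    (hg : ∀ (k : (ZMod q)ˣ) (m : ZMod q), g (m * k) = g m * χ k) {n : ℕ} (hn : n ≠ 0) :
    LSeries.convolution ((factoredBy q).indicator fun m ↦ g m) (fun k ↦ χ k) n = g n := by
  obtain ⟨m, hm, k, hk, hmk⟩ := exists_mem_factoredBy_mul_eq (NeZero.ne q) hn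
  rw [LSeries.convolution_def]
  refine (sum_eq_single (m, k) ?_ fun h ↦ ?_).trans ?_
  · rintro ⟨m', k'⟩ hmem hne
    by_cases hm' : m' ∈ factoredBy q
    · by_cases hk' : k'.Coprime q
      · obtain ⟨rfl, rfl⟩ := eq_of_mul_eq_mul_of_mem_factoredBy hm' hm hk' hk
          ((Nat.mem_divisorsAntidiagonal.1 hmem).1.trans hmk.symm)
        exact absurd rfl hne
      · rw [MulChar.map_nonunit χ (by rwa [ZMod.isUnit_iff_coprime]), mul_zero]
    · rw [Set.indicator_of_notMem hm', zero_mul]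
  · exact absurd (Nat.mem_divisorsAntidiagonal.2 ⟨hmk, hn⟩) h
  · have hunit := hg (ZMod.unitOfCoprime k hk) m
    rw [ZMod.coe_unitOfCoprime] at hunit
    rw [Set.indicator_of_mem hm, ← hunit, ← hmk, Nat.cast_mul]

lemma LSeries_eq_LSeries_factoredBy_mul_LFunction
    (hg : ∀ (k : (ZMod q)ˣ) (m : ZMod q), g (m * k) = g m * χ k) {s : ℂ} (hs : 1 < s.re) :
    LSeries (fun n ↦ g n) s =
      LSeries ((factoredBy q).indicator fun m ↦ g m) s * χ.LFunction s := by
  obtain ⟨B, hB⟩ := exists_norm_le_of_finite g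
  have hindicator (n : ℕ) : ‖(factoredBy q).indicator (fun m ↦ g m) n‖ ≤ B :=
    (norm_indicator_le_norm_self (fun m : ℕ ↦ g m) n).trans (hB n)
  have hsummable : LSeriesSummable ((factoredBy q).indicator fun m ↦ g m) s :=
    LSeriesSummable_of_bounded_of_one_lt_re (fun n _ ↦ hindicator n) hs
  have hsummable' : LSeriesSummable (fun k ↦ χ k) s :=
    LSeriesSummable_of_bounded_of_one_lt_re (fun n _ ↦ χ.norm_le_one _) hs
  rw [DirichletCharacter.LFunction_eq_LSeries χ hs, ← LSeries_convolution' hsummable hsummable']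
  exact LSeries_congr (fun hn ↦ (convolution_indicator_factoredBy hg hn).symm) s

lemma exists_tendsto_inv_LFunction (χ : DirichletCharacter ℂ q) :
    ∃ l, Tendsto (fun s ↦ (χ.LFunction s)⁻¹) (𝓝[≠] 1) (𝓝 l) := by
  by_cases hχ : χ = 1
  · have hresidue := DirichletCharacter.LFunctionTrivChar_residue_one (N := q)
    have hne : ∏ p ∈ q.primeFactors, (1 - (p : ℂ)⁻¹) ≠ 0 := by
      refine prod_ne_zero_iff.2 fun p hp ↦ sub_ne_zero.2 fun h ↦ ?_
      exact (Nat.prime_of_mem_primeFactors hp).ne_one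
        (by exact_mod_cast (inv_eq_one.1 h.symm : (p : ℂ) = 1))
    have hsub : Tendsto (fun s : ℂ ↦ s - 1) (𝓝[≠] 1) (𝓝 0) := by
      have hcont : Continuous fun s : ℂ ↦ s - 1 := by fun_prop
      simpa using (hcont.tendsto 1).mono_left nhdsWithin_le_nhds
    refine ⟨_, (hsub.mul (hresidue.inv₀ hne)).congr' ?_⟩
    filter_upwards [self_mem_nhdsWithin] with s hs
    rw [mul_inv, mul_inv_cancel_left₀ (sub_ne_zero.2 hs), hχ]
  · have hcont := (DirichletCharacter.differentiable_LFunction hχ).continuous.tendsto 1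
    exact ⟨_, (hcont.mono_left nhdsWithin_le_nhds).inv₀
      (DirichletCharacter.LFunction_apply_one_ne_zero hχ)⟩

lemma tendsto_one_add_ofReal : Tendsto (fun ε : ℝ ↦ (1 : ℂ) + ε) (𝓝[>] 0) (𝓝[≠] 1) := by
  refine tendsto_nhdsWithin_iff.2 ⟨?_, ?_⟩
  · have hcont : Continuous fun ε : ℝ ↦ (1 : ℂ) + ε := by fun_prop
    simpa using (hcont.tendsto 0).mono_left nhdsWithin_le_nhds
  · filter_upwards [self_mem_nhdsWithin] with ε hε
    simpa using ne_of_gt hε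

lemma continuousAt_LSeries_indicator_factoredNumbers (s : Finset ℕ) {c : ℕ → ℂ} {B : ℝ}
    (hc : ∀ n, ‖c n‖ ≤ B) : ContinuousAt (LSeries ((Nat.factoredNumbers s).indicator c)) 1 := by
  set a := (Nat.factoredNumbers s).indicator c with ha
  have hsummable : LSeriesSummable a ((1 / 2 : ℝ) : ℂ) := by
    have hbound := (summable_subtype_iff_indicator (f := fun n : ℕ ↦ (n : ℝ) ^ (-(1 / 2 : ℝ)))).1
      (summable_factoredNumbers_rpow s one_half_pos)
    refine (hbound.mul_left B).of_norm_bounded fun n ↦ ?_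
    by_cases hn : n ∈ Nat.factoredNumbers s
    · have hn0 := Nat.ne_zero_of_mem_factoredNumbers hn
      rw [LSeries.term_of_ne_zero hn0, norm_div, ha, Set.indicator_of_mem hn,
        Set.indicator_of_mem hn, Complex.norm_natCast_cpow_of_pos (Nat.pos_of_ne_zero hn0),
        Complex.ofReal_re, div_eq_mul_inv, ← Real.rpow_neg n.cast_nonneg]
      exact mul_le_mul_of_nonneg_right (hc n) (by positivity)
    · simp [LSeries.term_def, ha, Set.indicator_of_notMem hn]
  have habscissa : LSeries.abscissaOfAbsConv a < ((1 : ℂ).re : EReal) := by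
    refine hsummable.abscissaOfAbsConv_le.trans_lt ?_
    rw [Complex.ofReal_re, Complex.one_re]
    exact EReal.coe_lt_coe one_half_lt_one
  exact (LSeries_analyticOnNhd a 1 habscissa).continuousAt

lemma LSeries_indicator_one (A : Set ℕ) (c : ℕ → ℂ) :
    LSeries (A.indicator c) 1 = ∑' m : A, c m / (m : ℕ) := by
  rw [tsum_subtype A fun m ↦ c m / (m : ℂ)]
  refine tsum_congr fun n ↦ ?_
  rcases eq_or_ne n 0 with rfl | hn0
  · simp [Set.indicator]
  · by_cases hn : n ∈ A <;> simp [hn, hn0]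

lemma LSeries_term_div_natCast (c : ℕ → ℂ) (s : ℂ) :
    LSeries.term (fun n ↦ c n / n) s = LSeries.term c (1 + s) := by
  funext n
  by_cases hn : n = 0
  · simp [hn]
  · rw [LSeries.term_of_ne_zero hn, LSeries.term_of_ne_zero hn, div_div,
      Complex.cpow_add _ _ (Nat.cast_ne_zero.2 hn), Complex.cpow_one]

/- For `s > 1` the series of `g` is the series over `factoredBy q` times `L(s, χ)`. The former tends
to `0` as `s → 1` by Abel summation and `1 / L(s, χ)` stays bounded, so the latter tends to `0`. -/
lemma tsum_factoredBy_div_eq_zero_of_mul_unit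
    (hg : ∀ (k : (ZMod q)ˣ) (m : ZMod q), g (m * k) = g m * χ k)
    (hlim : Tendsto (fun N : ℕ ↦ ∑ n ∈ range N, g n / n) atTop (𝓝 0)) :
    ∑' m : factoredBy q, g (m : ℕ) / (m : ℕ) = 0 := by
  obtain ⟨B, hB⟩ := exists_norm_le_of_finite g
  have hre {ε : ℝ} (hε : 0 < ε) : 1 < ((1 : ℂ) + ε).re := by simpa using hε
  have habel : Tendsto (fun ε : ℝ ↦ LSeries (fun n ↦ g n) (1 + ε)) (𝓝[>] 0) (𝓝 0) := by
    have := tendsto_LSeries_of_tendsto_sum_Icc (c := fun n ↦ g n / n)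
      (((tendsto_add_atTop_iff_nat 1).2 hlim).congr (sum_range_succ_div_eq_sum_Icc fun n ↦ g n))
      fun ε hε ↦ by
        rw [LSeriesSummable, LSeries_term_div_natCast]
        exact LSeriesSummable_of_bounded_of_one_lt_re (fun n _ ↦ hB n) (hre hε)
    simpa only [LSeries, LSeries_term_div_natCast] using this
  obtain ⟨l, hl⟩ := exists_tendsto_inv_LFunction χ
  have hzero : Tendsto (fun ε : ℝ ↦ LSeries ((factoredBy q).indicator fun m ↦ g m) (1 + ε))
      (𝓝[>] 0) (𝓝 0) := by
    rw [← zero_mul l]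
    refine (habel.mul (hl.comp tendsto_one_add_ofReal)).congr' ?_
    filter_upwards [self_mem_nhdsWithin] with ε hε
    rw [LSeries_eq_LSeries_factoredBy_mul_LFunction hg (hre hε), Function.comp_apply,
      mul_inv_cancel_right₀]
    rw [DirichletCharacter.LFunction_eq_LSeries χ (hre hε)]
    exact DirichletCharacter.LSeries_ne_zero_of_one_lt_re χ (hre hε)
  have hcont := (continuousAt_LSeries_indicator_factoredNumbers q.primeFactors
    fun n ↦ hB n).tendsto.comp (tendsto_one_add_ofReal.mono_right nhdsWithin_le_nhds)
  rw [← LSeries_indicator_one _ fun m ↦ g m]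
  exact tendsto_nhds_unique hcont hzero

/-- The `χ⁻¹`-isotypic component of `F`, up to the factor `φ(q)`, for the action of `(ZMod q)ˣ` on
functions modulo `q` by dilation. -/
noncomputable def charComponent (χ : DirichletCharacter ℂ q) (F : ZMod q → ℂ) (n : ZMod q) : ℂ :=
  ∑ h : (ZMod q)ˣ, χ h * F (h * n)

variable {F : ZMod q → ℂ}

lemma charComponent_mul_unit (χ : DirichletCharacter ℂ q) (k : (ZMod q)ˣ) (m : ZMod q) :
    charComponent χ F (m * k) = charComponent χ F m * χ⁻¹ k := by
  rw [charComponent, charComponent, sum_mul, ← Equiv.sum_comp (Equiv.mulRight k⁻¹)]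
  refine sum_congr rfl fun h _ ↦ ?_
  have harg : ((h * k⁻¹ : (ZMod q)ˣ) : ZMod q) * (m * k) = h * m := by
    rw [Units.val_mul, mul_mul_mul_comm, Units.inv_mul, mul_one]
  rw [Equiv.coe_mulRight, harg, Units.val_mul, map_mul, MulChar.inv_apply, Ring.inverse_unit]
  ring

lemma sum_charComponent (F : ZMod q → ℂ) (n : ZMod q) :
    ∑ χ, charComponent χ F n = q.totient * F n := by
  simp only [charComponent]
  rw [sum_comm]
  simp only [← sum_mul, DirichletCharacter.sum_characters_eq]
  rw [sum_eq_single 1 (fun u _ hu ↦ by rw [if_neg (by simpa using hu), zero_mul]) (by simp)]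
  simp

theorem tsum_factoredBy_div_eq_zero
    (hF : ∀ u : (ZMod q)ˣ, Tendsto (fun N : ℕ ↦ ∑ n ∈ range N, F (u * n) / n) atTop (𝓝 0)) :
    ∑' m : factoredBy q, F (m : ℕ) / (m : ℕ) = 0 := by
  have hcomponent (χ : DirichletCharacter ℂ q) :
      ∑' m : factoredBy q, charComponent χ F (m : ℕ) / (m : ℕ) = 0 := by
    refine tsum_factoredBy_div_eq_zero_of_mul_unit (charComponent_mul_unit χ) ?_
    have hlim := tendsto_finsetSum univ fun (h : (ZMod q)ˣ) _ ↦ (hF h).const_mul (χ h)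
    simp only [mul_zero, sum_const_zero] at hlim
    refine hlim.congr fun N ↦ ?_
    simp only [charComponent, mul_sum, sum_div]
    rw [sum_comm]
    exact sum_congr rfl fun _ _ ↦ sum_congr rfl fun _ _ ↦ by ring
  have hsummable (χ : DirichletCharacter ℂ q) :
      Summable fun m : factoredBy q ↦ charComponent χ F (m : ℕ) / (m : ℕ) := by
    obtain ⟨B, hB⟩ := exists_norm_le_of_finite (charComponent χ F)
    refine ((hasSum_factoredBy_inv (NeZero.ne q)).summable.mul_left B).of_norm_bounded fun m ↦ ?_
    rw [norm_div, Complex.norm_natCast, div_eq_mul_inv]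
    gcongr
    exact hB _
  have hsum := Summable.tsum_finsetSum fun χ (_ : χ ∈ univ) ↦ hsummable χ
  simp only [hcomponent, sum_const_zero, ← sum_div, sum_charComponent, mul_div_assoc,
    tsum_mul_left] at hsum
  refine (mul_eq_zero.1 hsum).resolve_left ?_
  exact_mod_cast (Nat.totient_pos.2 (NeZero.pos q)).ne'

end CharacterDecomposition

section TotientBound

lemma norm_le_sub_of_hasSum_zero {ι E : Type*} [SeminormedAddCommGroup E] {g : ι → E} {a : ι → ℝ}
    {S : ℝ} (hg : HasSum g 0) (hga : ∀ i, ‖g i‖ ≤ a i) (ha : HasSum a S) (i : ι) :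
    ‖g i‖ ≤ S - a i := by
  classical
  have hle := (hg.update i 0).norm_le_of_bounded (ha.update i 0) fun j ↦ by
    by_cases hj : j = i
    · simp [hj]
    · simpa [hj] using hga j
  simpa [sub_eq_neg_add] using hle

variable {q : ℕ}

lemma two_le_div_totient_of_tsum_eq_zero (hq : q ≠ 0) {F : ZMod q → ℤ} (hF : ∀ a, |F a| ≤ 1)
    (hF1 : |F 1| = 1) (hsum : ∑' m : factoredBy q, (F (m : ℕ) : ℂ) / (m : ℕ) = 0) :
    2 ≤ (q : ℝ) / q.totient := by
  have hinv := hasSum_factoredBy_inv hq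
  have hle (m : factoredBy q) : ‖(F (m : ℕ) : ℂ) / (m : ℕ)‖ ≤ ((m : ℕ) : ℝ)⁻¹ := by
    rw [norm_div, Complex.norm_natCast, Complex.norm_intCast, div_eq_mul_inv]
    exact mul_le_of_le_one_left (by positivity) (by exact_mod_cast hF _)
  have hzero := hsum ▸ (hinv.summable.of_norm_bounded hle).hasSum
  have hone := norm_le_sub_of_hasSum_zero hzero hle hinv ⟨1, one_mem_factoredBy⟩
  have hnorm : ‖(F 1 : ℂ)‖ = 1 := by
    rw [Complex.norm_intCast]
    exact_mod_cast hF1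
  simp only [Nat.cast_one, div_one, inv_one, hnorm] at hone
  linarith

lemma exists_zmod_of_isErdosian (hq : 1 < q) {f : ℕ → ℤ} (hf : IsErdosian q f) :
    ∃ F : ZMod q → ℤ, (∀ n : ℕ, 1 ≤ n → F n = f n) ∧ (∀ a, |F a| ≤ 1) ∧ |F 1| = 1 := by
  have : NeZero q := ⟨by omega⟩
  obtain ⟨hper, hunit, hzero⟩ := hf
  have hper' : Function.Periodic (fun n ↦ f (n + q)) q := fun n ↦ hper (n + q) (by omega)
  have hF (n : ℕ) (hn : 1 ≤ n) : f ((n : ZMod q).val + q) = f n := by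
    rw [ZMod.val_natCast, hper'.map_mod_nat n]
    exact hper n hn
  refine ⟨fun a ↦ f (a.val + q), hF, fun a ↦ ?_, ?_⟩
  · by_cases ha : q ∣ a.val + q
    · simp [hzero _ (by omega) ha]
    · rcases hunit _ (by omega) ha with h | h <;> simp [h]
  · have hF1 := hF 1 le_rfl
    rw [Nat.cast_one] at hF1
    rcases hunit 1 le_rfl (by simpa using hq.ne') with h | h <;> simp [hF1, h]

lemma tendsto_sum_range_div_of_tendsto_sum_Icc {c : ℕ → ℤ}
    (h : Tendsto (fun N : ℕ ↦ ∑ n ∈ Icc 1 N, (c n : ℝ) / n) atTop (𝓝 0)) :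
    Tendsto (fun N : ℕ ↦ ∑ n ∈ range N, (c n : ℂ) / n) atTop (𝓝 0) := by
  rw [← tendsto_add_atTop_iff_nat 1]
  have hofReal := (Complex.continuous_ofReal.tendsto 0).comp h
  rw [Complex.ofReal_zero] at hofReal
  refine hofReal.congr fun N ↦ ?_
  rw [sum_range_succ_div_eq_sum_Icc fun n ↦ (c n : ℂ), Function.comp_apply, Complex.ofReal_sum]
  exact sum_congr rfl fun n _ ↦ by push_cast; rfl

theorem two_le_div_totient_of_erdosConjectureFalse (hq : 1 < q) (h : ErdosConjectureFalse q) :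
    2 ≤ (q : ℝ) / q.totient := by
  have : NeZero q := ⟨by omega⟩
  obtain ⟨f, hf, hlim⟩ := h
  obtain ⟨F, hFf, hF, hF1⟩ := exists_zmod_of_isErdosian hq hf
  have hlimF : Tendsto (fun N : ℕ ↦ ∑ n ∈ range N, (F n : ℂ) / n) atTop (𝓝 0) := by
    refine tendsto_sum_range_div_of_tendsto_sum_Icc (hlim.congr fun N ↦ ?_)
    exact sum_congr rfl fun n hn ↦ by rw [hFf n (mem_Icc.1 hn).1]
  have hsum := sum_eq_zero_of_tendsto_sum_range_div (f := fun a ↦ (F a : ℂ)) hlimF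
  have hlog := dftLogSum_eq_zero_of_tendsto (f := fun a ↦ (F a : ℂ)) hlimF
  refine two_le_div_totient_of_tsum_eq_zero (NeZero.ne q) hF hF1
    (tsum_factoredBy_div_eq_zero (F := fun a ↦ (F a : ℂ)) fun u ↦ ?_)
  have hsumu : ∑ a, (F (u * a) : ℂ) = 0 :=
    (Equiv.sum_comp (Units.mulLeft u) fun a ↦ (F a : ℂ)).trans hsum
  have hlimu := tendsto_sum_range_div_of_sum_eq_zero (f := fun a : ZMod q ↦ (F (u * a) : ℂ)) hsumu
  rwa [dftLogSum_comp_unitMul_eq_zero hlog u, mul_zero] at hlimu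

end TotientBound

/-! ### The second moment -/

section TotientDivisorSum

/-- `∑ 1 / φ(d)` over the odd divisors `d ≥ 3` of `q`. For odd `q` it bounds `q / φ(q) - 1`, and its
second moment over `q ≡ 1 (mod 4)` is what controls the exceptional moduli. -/
noncomputable def totientDivisorSum (q : ℕ) : ℝ :=
  ∑ d ∈ q.divisors with Odd d ∧ 3 ≤ d, 1 / (d.totient : ℝ)

variable {q : ℕ}

lemma div_totient_eq_prod (hq : q ≠ 0) :
    (q : ℝ) / q.totient = ∏ p ∈ q.primeFactors, (1 + 1 / (p.totient : ℝ)) := by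
  rw [cast_totient_eq_mul_prod, div_mul_eq_div_div, div_self (Nat.cast_ne_zero.2 hq), one_div,
    ← prod_inv_distrib]
  refine prod_congr rfl fun p hp ↦ ?_
  have hprime := Nat.prime_of_mem_primeFactors hp
  have hp1 : (1 : ℝ) < p := by exact_mod_cast hprime.one_lt
  have hsub : (p : ℝ) - 1 ≠ 0 := by linarith
  have hp0 : (p : ℝ) ≠ 0 := by linarith
  rw [Nat.totient_prime hprime, Nat.cast_pred hprime.pos]
  field_simp
  ring

lemma div_totient_le_sum_divisors (hq : q ≠ 0) :
    (q : ℝ) / q.totient ≤ ∑ d ∈ q.divisors, 1 / (d.totient : ℝ) := by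
  let invTotient : ArithmeticFunction ℝ := ⟨fun d ↦ 1 / (d.totient : ℝ), by simp⟩
  have hmult : invTotient.IsMultiplicative := by
    refine ⟨by simp [invTotient], fun {m n} hmn ↦ ?_⟩
    simp [invTotient, Nat.totient_mul hmn, mul_comm]
  let r := UniqueFactorizationMonoid.radical q
  have hr : r ∣ q := UniqueFactorizationMonoid.radical_dvd_self
  have hfactors : r.primeFactors = q.primeFactors := Nat.primeFactors_radical q
  have hsquarefree : Squarefree r := UniqueFactorizationMonoid.squarefree_radical
  calc (q : ℝ) / q.totient
      = ∏ p ∈ r.primeFactors, (1 + invTotient p) := by rw [hfactors]; exact div_totient_eq_prod hq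
    _ = ∑ d ∈ r.divisors, invTotient d := hmult.prodPrimeFactors_one_add_of_squarefree hsquarefree
    _ ≤ ∑ d ∈ q.divisors, invTotient d :=
      sum_le_sum_of_subset_of_nonneg (Nat.divisors_subset_of_dvd hq hr) fun d _ _ ↦
        one_div_nonneg.2 d.totient.cast_nonneg

lemma div_totient_le_one_add_totientDivisorSum (hq : Odd q) :
    (q : ℝ) / q.totient ≤ 1 + totientDivisorSum q := by
  have hq0 : q ≠ 0 := hq.pos.ne'
  have hfilter : {d ∈ q.divisors | Odd d ∧ 3 ≤ d} = q.divisors.erase 1 := by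
    ext d
    simp only [mem_filter, mem_erase, Nat.mem_divisors]
    constructor
    · rintro ⟨hd, -, hd3⟩
      exact ⟨by omega, hd⟩
    · rintro ⟨hd1, hd⟩
      obtain ⟨k, rfl⟩ := Odd.of_dvd_nat hq hd.1
      exact ⟨hd, odd_two_mul_add_one k, by omega⟩
  calc (q : ℝ) / q.totient ≤ ∑ d ∈ q.divisors, 1 / (d.totient : ℝ) :=
        div_totient_le_sum_divisors hq0
    _ = 1 + totientDivisorSum q := by
        rw [totientDivisorSum, hfilter, ← add_sum_erase _ _ (Nat.one_mem_divisors.2 hq0)]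
        simp

lemma one_le_totientDivisorSum_of_erdosConjectureFalse (hq : Odd q) (hq1 : q ≠ 1)
    (h : ErdosConjectureFalse q) : 1 ≤ totientDivisorSum q := by
  have htwo := two_le_div_totient_of_erdosConjectureFalse (by have := hq.pos; omega) h
  linarith [div_totient_le_one_add_totientDivisorSum hq]

end TotientDivisorSum

section Counting

/-- The number of positive integers `n ≤ X` with `n ≡ 1 (mod 4)` and `l ∣ n`. -/
def countOneModFour (l X : ℕ) : ℕ := #{n ∈ Icc 1 X | n % 4 = 1 ∧ l ∣ n}

lemma abs_count_modEq_sub_div_le {r : ℕ} (hr : 0 < r) (v b : ℕ) :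
    |(b.count (· ≡ v [MOD r]) : ℝ) - b / r| ≤ 1 := by
  have hr' : (0 : ℝ) < r := by exact_mod_cast hr
  have hfloor : ((b / r : ℕ) : ℝ) ≤ b / r := Nat.cast_div_le
  have hceil : (b : ℝ) / r ≤ (b / r : ℕ) + 1 := by
    rw [div_le_iff₀' hr']
    exact_mod_cast (Nat.lt_mul_div_succ b hr).le
  rw [Nat.count_modEq_card b hr, abs_le]
  split_ifs <;> push_cast <;> constructor <;> linarith

variable {l : ℕ}

lemma exists_countOneModFour_eq_count (hl : Odd l) :
    ∃ v, ∀ X, countOneModFour l X = (X + 1).count (· ≡ v [MOD 4 * l]) := by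
  have hcoprime : Nat.Coprime 4 l := (Nat.coprime_two_left.2 hl).pow_left 2
  obtain ⟨v, hv4, hvl⟩ := Nat.chineseRemainder hcoprime 1 0
  refine ⟨v, fun X ↦ ?_⟩
  rw [Nat.count_eq_card_filter_range, countOneModFour]
  congr 1
  ext n
  have hmod4 : n ≡ v [MOD 4] ↔ n % 4 = 1 := ⟨fun h ↦ h.trans hv4, fun h ↦ Eq.trans h hv4.symm⟩
  have hmodl : n ≡ v [MOD l] ↔ l ∣ n := by
    rw [← Nat.modEq_zero_iff_dvd]
    exact ⟨fun h ↦ h.trans hvl, fun h ↦ h.trans hvl.symm⟩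
  simp only [mem_filter, mem_Icc, mem_range, ← Nat.modEq_and_modEq_iff_modEq_mul hcoprime, hmod4,
    hmodl]
  grind

lemma abs_countOneModFour_sub_le (hl : Odd l) (X : ℕ) :
    |(countOneModFour l X : ℝ) - X / (4 * l)| ≤ 2 := by
  obtain ⟨v, hv⟩ := exists_countOneModFour_eq_count hl
  have hcount := abs_le.1 (abs_count_modEq_sub_div_le (r := 4 * l) (by have := hl.pos; omega) v
    (X + 1))
  have hl1 : (1 : ℝ) ≤ l := by exact_mod_cast hl.pos
  have hshift : 1 / (4 * (l : ℝ)) ∈ Set.Icc 0 1 :=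
    ⟨by positivity, (div_le_one (by positivity)).2 (by linarith)⟩
  push_cast [add_div] at hcount
  rw [hv, abs_le]
  constructor <;> linarith [hshift.1, hshift.2]

lemma tendsto_countOneModFour_div (hl : Odd l) :
    Tendsto (fun X : ℕ ↦ (countOneModFour l X : ℝ) / (X / 4)) atTop (𝓝 (1 / (l : ℝ))) := by
  refine tendsto_iff_norm_sub_tendsto_zero.2 <| squeeze_zero' (.of_forall fun _ ↦ norm_nonneg _) ?_
    (tendsto_const_div_atTop_nhds_zero_nat (8 : ℝ))
  filter_upwards [eventually_gt_atTop 0] with X hX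
  have : (0 : ℝ) < X := by exact_mod_cast hX
  have hl0 : (l : ℝ) ≠ 0 := by exact_mod_cast hl.pos.ne'
  have hsub : (countOneModFour l X : ℝ) / (X / 4) - 1 / l =
      (countOneModFour l X - X / (4 * l)) / (X / 4) := by field_simp
  rw [hsub, Real.norm_eq_abs, abs_div, abs_of_pos (by positivity : (0 : ℝ) < X / 4),
    div_le_iff₀ (by positivity)]
  exact (abs_countOneModFour_sub_le hl X).trans_eq (by field_simp; norm_num)

lemma countOneModFour_div_le (l X : ℕ) : (countOneModFour l X : ℝ) / (X / 4) ≤ 4 / l := by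
  have hcard : countOneModFour l X ≤ X / l := by
    rw [← Nat.Ioc_filter_dvd_card_eq_div]
    refine card_le_card fun n hn ↦ ?_
    simp only [mem_filter, mem_Icc, mem_Ioc] at hn ⊢
    exact ⟨⟨by omega, hn.1.2⟩, hn.2.2⟩
  calc (countOneModFour l X : ℝ) / (X / 4) ≤ (X / l) / (X / 4) := by
        gcongr
        exact (Nat.cast_le.2 hcard).trans Nat.cast_div_le
    _ = X / X * (4 / l) := by ring
    _ ≤ 4 / l := mul_le_of_le_one_left (by positivity) (div_self_le_one _)

end Counting

section SecondMoment

/-- The index set of the sum in the theorem: the odd integers `d ≥ 3`. -/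
abbrev OddGeThree := {d : ℕ // Odd d ∧ 3 ≤ d}

lemma hasSum_ite_dvd {p : ℕ → Prop} [DecidablePred p] {q : ℕ} (hq : q ≠ 0) (w : ℕ → ℝ) :
    HasSum (fun d : {d // p d} ↦ if (d : ℕ) ∣ q then w d else 0)
      (∑ d ∈ q.divisors with p d, w d) := by
  have hzero (d : {d // p d}) (hd : d ∉ q.divisors.subtype p) :
      (if (d : ℕ) ∣ q then w d else 0) = 0 :=
    if_neg fun h ↦ hd (mem_subtype.2 (Nat.mem_divisors.2 ⟨h, hq⟩))
  have hsum : ∑ d ∈ q.divisors.subtype p, w d =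
      ∑ d ∈ q.divisors.subtype p, if (d : ℕ) ∣ q then w d else 0 :=
    sum_congr rfl fun d hd ↦ (if_pos (Nat.dvd_of_mem_divisors (mem_subtype.1 hd))).symm
  rw [← sum_subtype_eq_sum_filter, hsum]
  exact hasSum_sum_of_ne_finset_zero hzero

lemma hasSum_ite_lcm_dvd {q : ℕ} (hq : q ≠ 0) :
    HasSum (fun d : OddGeThree × OddGeThree ↦ if Nat.lcm d.1 d.2 ∣ q then
      1 / ((d.1.1.totient : ℝ) * d.2.1.totient) else 0) (totientDivisorSum q ^ 2) := by
  have hsum : HasSum (fun d : OddGeThree ↦ if (d : ℕ) ∣ q then 1 / (d.1.totient : ℝ) else 0)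
      (totientDivisorSum q) := hasSum_ite_dvd hq fun d ↦ 1 / (d.totient : ℝ)
  have hsummable := summable_mul_of_summable_norm hsum.summable.norm hsum.summable.norm
  rw [sq]
  refine (hsum.mul hsum hsummable).congr_fun fun d ↦ ?_
  simp only [Nat.lcm_dvd_iff, ite_and, one_div, mul_inv]
  split_ifs <;> simp

lemma hasSum_totientDivisorSum_sq (X : ℕ) :
    HasSum (fun d : OddGeThree × OddGeThree ↦
        1 / ((d.1.1.totient : ℝ) * d.2.1.totient) * countOneModFour (Nat.lcm d.1 d.2) X)
      (∑ q ∈ Icc 1 X with q % 4 = 1, totientDivisorSum q ^ 2) := by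
  have hsum := hasSum_sum fun q (hq : q ∈ ({q ∈ Icc 1 X | q % 4 = 1} : Finset ℕ)) ↦
    hasSum_ite_lcm_dvd (q := q) (by have := (mem_Icc.1 (mem_filter.1 hq).1).1; omega)
  refine hsum.congr_fun fun d ↦ ?_
  rw [← sum_filter, filter_filter, sum_const, nsmul_eq_mul, mul_comm, countOneModFour]

open scoped Classical in
lemma card_erdosConjectureFalse_le (X : ℕ) :
    (#{q ∈ Icc 1 X | q % 4 = 1 ∧ ErdosConjectureFalse q} : ℝ) ≤
      1 + ∑ q ∈ Icc 1 X with q % 4 = 1, totientDivisorSum q ^ 2 := by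
  have hterm {q : ℕ} (hq : q % 4 = 1 ∧ ErdosConjectureFalse q) :
      1 ≤ (if q = 1 then 1 else 0) + totientDivisorSum q ^ 2 := by
    split_ifs with hq1
    · linarith [sq_nonneg (totientDivisorSum q)]
    · rw [zero_add]
      exact one_le_pow₀ (one_le_totientDivisorSum_of_erdosConjectureFalse
        (Nat.odd_iff.2 (by omega)) hq1 hq.2)
  calc (#{q ∈ Icc 1 X | q % 4 = 1 ∧ ErdosConjectureFalse q} : ℝ)
      = ∑ q ∈ Icc 1 X with q % 4 = 1 ∧ ErdosConjectureFalse q, (1 : ℝ) := by simp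
    _ ≤ ∑ q ∈ Icc 1 X with q % 4 = 1 ∧ ErdosConjectureFalse q,
          ((if q = 1 then 1 else 0) + totientDivisorSum q ^ 2) :=
        sum_le_sum fun q hq ↦ hterm (mem_filter.1 hq).2
    _ ≤ ∑ q ∈ Icc 1 X with q % 4 = 1, ((if q = 1 then 1 else 0) + totientDivisorSum q ^ 2) :=
        sum_le_sum_of_subset_of_nonneg (monotone_filter_right _ fun _ _ h ↦ h.1)
          fun q _ _ ↦ by positivity
    _ ≤ 1 + ∑ q ∈ Icc 1 X with q % 4 = 1, totientDivisorSum q ^ 2 := by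
        rw [sum_add_distrib, sum_ite_eq']
        gcongr
        split_ifs <;> norm_num

end SecondMoment

section Convergence

/- It suffices to check prime powers; the tightest case is `3`, where
`3 ^ 5 = 243 ≤ 256 = 2 ^ 8`. -/
lemma pow_five_le_totient_pow_eight {d : ℕ} (hd : Odd d) : d ^ 5 ≤ d.totient ^ 8 := by
  induction d using Nat.recOnPosPrimePosCoprime with
  | zero => simp
  | one => simp
  | prime_pow p n hp hn =>
    have hp3 : 3 ≤ p := by
      have hodd : Odd p := (Nat.odd_pow_iff hn.ne').1 hd
      have := hp.two_le
      grind
    have hprime : p ^ 5 ≤ (p - 1) ^ 8 := by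
      obtain ⟨m, rfl⟩ := Nat.exists_eq_add_of_le hp3
      rw [show 3 + m - 1 = m + 2 by omega]
      ring_nf
      linarith [Nat.zero_le (m ^ 2), Nat.zero_le (m ^ 3), Nat.zero_le (m ^ 4), Nat.zero_le (m ^ 5),
        Nat.zero_le (m ^ 6), Nat.zero_le (m ^ 7), Nat.zero_le (m ^ 8)]
    rw [Nat.totient_prime_pow hp hn, mul_pow, ← Nat.sub_add_cancel hn, pow_succ p, mul_pow]
    exact Nat.mul_le_mul (Nat.pow_le_pow_right (pow_pos hp.pos _) (by norm_num)) hprime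
  | coprime a b _ _ hab iha ihb =>
    rw [Nat.odd_mul] at hd
    rw [Nat.totient_mul hab, mul_pow, mul_pow]
    exact Nat.mul_le_mul (iha hd.1) (ihb hd.2)

lemma one_div_totient_mul_totient_mul_lcm_le {a b : ℕ} (ha : Odd a) (hb : Odd b) :
    1 / ((a.totient : ℝ) * b.totient * Nat.lcm a b) ≤
      1 / (a : ℝ) ^ (9 / 8 : ℝ) * (1 / (b : ℝ) ^ (9 / 8 : ℝ)) := by
  have ha0 : (0 : ℝ) < a := by exact_mod_cast ha.pos
  have hb0 : (0 : ℝ) < b := by exact_mod_cast hb.pos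
  have hlcm : 0 < Nat.lcm a b := Nat.lcm_pos ha.pos hb.pos
  have hpow : (a * b) ^ 9 ≤ (a.totient * b.totient * Nat.lcm a b) ^ 8 :=
    calc (a * b) ^ 9 = (a ^ 5 * b ^ 5) * (a ^ 4 * b ^ 4) := by ring
      _ ≤ (a.totient ^ 8 * b.totient ^ 8) * (Nat.lcm a b ^ 4 * Nat.lcm a b ^ 4) := by
        gcongr ?_ * ?_ * (?_ ^ 4 * ?_ ^ 4)
        · exact pow_five_le_totient_pow_eight ha
        · exact pow_five_le_totient_pow_eight hb
        · exact Nat.le_of_dvd hlcm (Nat.dvd_lcm_left a b)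
        · exact Nat.le_of_dvd hlcm (Nat.dvd_lcm_right a b)
      _ = (a.totient * b.totient * Nat.lcm a b) ^ 8 := by ring
  rw [one_div_mul_one_div, ← Real.mul_rpow ha0.le hb0.le]
  refine one_div_le_one_div_of_le (by positivity) ?_
  refine le_of_pow_le_pow_left₀ (n := 8) (by norm_num) (by positivity) ?_
  calc (((a : ℝ) * b) ^ (9 / 8 : ℝ)) ^ 8 = ((a : ℝ) * b) ^ 9 := by
        rw [← Real.rpow_natCast, ← Real.rpow_mul (by positivity), ← Real.rpow_natCast]
        norm_num
    _ ≤ ((a.totient : ℝ) * b.totient * Nat.lcm a b) ^ 8 := by exact_mod_cast hpow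

lemma summable_one_div_totient_mul_totient_mul_lcm : Summable fun d : OddGeThree × OddGeThree ↦
    1 / ((d.1.1.totient : ℝ) * d.2.1.totient * Nat.lcm d.1 d.2) := by
  have hsingle : Summable fun d : OddGeThree ↦ 1 / ((d : ℕ) : ℝ) ^ (9 / 8 : ℝ) :=
    (Real.summable_one_div_nat_rpow.2 (by norm_num)).comp_injective Subtype.val_injective
  have hprod := hsingle.mul_of_nonneg hsingle (fun _ ↦ by positivity) fun _ ↦ by positivity
  exact hprod.of_nonneg_of_le (fun _ ↦ by positivity) fun d ↦
    one_div_totient_mul_totient_mul_lcm_le d.1.2.1 d.2.2.1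

theorem tendsto_sum_totientDivisorSum_sq_div :
    Tendsto (fun X : ℕ ↦ (∑ q ∈ Icc 1 X with q % 4 = 1, totientDivisorSum q ^ 2) / ((X : ℝ) / 4))
      atTop (𝓝 (∑' d : OddGeThree × OddGeThree,
        1 / ((d.1.1.totient : ℝ) * d.2.1.totient * Nat.lcm d.1 d.2))) := by
  simp only [← fun X ↦ (hasSum_totientDivisorSum_sq X).tsum_eq, ← tsum_div_const, mul_div_assoc]
  refine tendsto_tsum_of_dominated_convergence
    (summable_one_div_totient_mul_totient_mul_lcm.mul_left 4) (fun d ↦ ?_)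
    (.of_forall fun X d ↦ ?_)
  · have hodd : Odd (Nat.lcm d.1 d.2) :=
      .of_dvd_nat (Nat.odd_mul.2 ⟨d.1.2.1, d.2.2.1⟩) (Nat.lcm_dvd_mul _ _)
    rw [← one_div_mul_one_div (_ * _)]
    exact (tendsto_countOneModFour_div hodd).const_mul _
  · rw [Real.norm_of_nonneg (by positivity)]
    calc _ ≤ 1 / ((d.1.1.totient : ℝ) * d.2.1.totient) * (4 / Nat.lcm d.1 d.2) := by
          gcongr ?_ * ?_
          exact countOneModFour_div_le _ X
      _ = 4 * (1 / ((d.1.1.totient : ℝ) * d.2.1.totient * Nat.lcm d.1 d.2)) := by ring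

end Convergence

open scoped Classical in
theorem erdos_false_density_second_moment :
    Summable (fun d : {d : ℕ // Odd d ∧ 3 ≤ d} × {d : ℕ // Odd d ∧ 3 ≤ d} =>
      1 / (((Nat.totient (d.1 : ℕ) : ℝ)) * (Nat.totient (d.2 : ℕ) : ℝ) *
        (Nat.lcm (d.1 : ℕ) (d.2 : ℕ) : ℝ))) ∧
    atTop.limsup (fun X : ℕ =>
      (((Finset.Icc 1 X).filter
        (fun q => q % 4 = 1 ∧ ErdosConjectureFalse q)).card : ℝ) / ((X : ℝ) / 4)) ≤
      ∑' d : {d : ℕ // Odd d ∧ 3 ≤ d} × {d : ℕ // Odd d ∧ 3 ≤ d},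
        1 / (((Nat.totient (d.1 : ℕ) : ℝ)) * (Nat.totient (d.2 : ℕ) : ℝ) *
          (Nat.lcm (d.1 : ℕ) (d.2 : ℕ) : ℝ)) := by
  refine ⟨summable_one_div_totient_mul_totient_mul_lcm, ?_⟩
  have hone : Tendsto (fun X : ℕ ↦ 1 / ((X : ℝ) / 4)) atTop (𝓝 0) := by
    simpa only [one_div_div] using tendsto_const_div_atTop_nhds_zero_nat (4 : ℝ)
  have hmoment := hone.add tendsto_sum_totientDivisorSum_sq_div
  rw [zero_add] at hmoment
  rw [← hmoment.limsup_eq]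
  refine limsup_le_limsup (.of_forall fun X ↦ ?_)
    (isCoboundedUnder_le_of_le (x := 0) atTop fun X ↦ ?_) hmoment.isBoundedUnder_le
  · beta_reduce
    rw [← add_div]
    exact div_le_div_of_nonneg_right (card_erdosConjectureFalse_le X) (by positivity)
  · exact div_nonneg (Nat.cast_nonneg _) (by positivity)
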